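/- arXiv:math/0606060 — 2 statements merged into one kernel-verified Lean document; each statement's English description precedes it below -/
import Mathlib

section
/- Let M be a finite von Neumann algebra with faithful normal trace τ, let N ⊆ M be an abelian von Neumann subalgebra, let P_N : M → N be the trace-preserving conditional expectation, and let (b₁,…,b_n) be a commuting family of self-adjoint elements of M. Then τ(f(P_N(b₁),…,P_N(b_n))) ≤ τ(f(b₁,…,b_n)) for every continuous convex function f : ℝⁿ → ℝ. -/
open MeasureTheory
open scoped ComplexOrder
section Kad
variable {M : Type*} [CStarAlgebra M]

theorem kad_pres_sa (P : M →ₗ[ℂ] M) 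
    (hPpos : ∀ x : M, (∃ y, x = star y * y) → ∃ y, P x = star y * y)
    (x : M) (hx : star x = x) : star (P x) = P x := by
  have key : ∀ y : M, star (P (star y * y)) = P (star y * y) := by
    intro y
    obtain ⟨z, hz⟩ := hPpos _ ⟨y, rfl⟩
    rw [hz]; simp
  have e : x = (1/4 : ℂ) • (star (x+1) * (x+1) - star (x-1) * (x-1)) := by
    simp only [star_add, star_sub, hx, star_one]
    have : (x+1)*(x+1) - (x-1)*(x-1) = (4:ℂ) • x := by
      rw [show (4:ℂ) • x = x + x + x + x by
        rw [show (4:ℂ) = 1+1+1+1 by norm_num]; simp only [add_smul, one_smul]]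
      noncomm_ring
    rw [this, smul_smul]; norm_num
  rw [e, map_smul, map_sub, star_smul, star_sub, key, key]
  simp

theorem kad_sqrt (w : M) (hw : IsSelfAdjoint w) (h : ∀ z ∈ spectrum ℂ w, 0 ≤ z.re) :
    ∃ y, w = star y * y := by
  have hs : ∀ r ∈ spectrum ℝ w, 0 ≤ r := by
    intro r hr
    have := h (r:ℂ) ((spectrum.algebraMap_mem_iff ℂ).2 hr)
    simpa using this
  refine ⟨cfc Real.sqrt w, ?_⟩
  rw [(cfc_predicate Real.sqrt w : IsSelfAdjoint _).star_eq, ← cfc_mul Real.sqrt Real.sqrt w]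
  conv_lhs => rw [← cfc_id ℝ w]
  exact cfc_congr fun r hr => (Real.mul_self_sqrt (hs r hr)).symm

theorem kad_schwarz (N : StarSubalgebra ℂ M) (hNab : ∀ x ∈ N, ∀ y ∈ N, x * y = y * x)
    (P : M →ₗ[ℂ] M) (hP1 : P 1 = 1)
    (hPpos : ∀ x : M, (∃ y, x = star y * y) → ∃ y, P x = star y * y)
    (hPrange : ∀ x : M, P x ∈ N) (x : M) (hx : star x = x) :
    ∃ y, P (x * x) - P x * P x = star y * y := by
  have hsa := kad_pres_sa P hPpos
  let S := N.topologicalClosure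
  have hScl : IsClosed (S : Set M) := N.isClosed_topologicalClosure
  let : CStarAlgebra S := StarSubalgebra.cstarAlgebra S (h_closed := hScl)
  let : CommCStarAlgebra S :=
    { (inferInstance : CStarAlgebra S) with
      mul_comm := (N.commRingTopologicalClosure (fun a b => Subtype.ext (hNab a a.2 b b.2))).mul_comm }
  have hle : N ≤ S := N.le_topologicalClosure
  let Q : M →ₗ[ℂ] S :=
    { toFun := fun x => ⟨P x, hle (hPrange x)⟩
      map_add' := fun x y => Subtype.ext (by simp)
      map_smul' := fun c x => Subtype.ext (by simp) }
  have hQ1 : Q 1 = 1 := Subtype.ext hP1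
  have hQ : ∀ x, ((Q x : S) : M) = P x := fun _ => rfl
  have hχ : ∀ (χ : WeakDual.characterSpace ℂ S) (y : M), star y = y → 0 ≤ (χ (Q (y * y))).re := by
    intro χ y hy
    have h1 : χ (Q (y*y)) ∈ spectrum ℂ (Q (y*y)) :=
      WeakDual.CharacterSpace.mem_spectrum_iff_exists.2 ⟨χ, rfl⟩
    rw [StarSubalgebra.spectrum_eq (hS := hScl), hQ] at h1
    obtain ⟨z, hz⟩ := hPpos (y*y) ⟨y, by rw [hy]⟩
    rw [hz] at h1
    have h2 := (IsSelfAdjoint.star_mul_self z).mem_spectrum_eq_re h1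
    rw [h2] at h1
    exact spectrum_star_mul_self_nonneg _ ((spectrum.algebraMap_mem_iff ℂ).1 h1)
  have hreal : ∀ (χ : WeakDual.characterSpace ℂ S), χ (Q x) = ((χ (Q x)).re : ℂ) := by
    intro χ
    refine IsSelfAdjoint.mem_spectrum_eq_re (a := Q x) (Subtype.ext (hsa x hx)) ?_
    exact WeakDual.CharacterSpace.mem_spectrum_iff_exists.2 ⟨χ, rfl⟩
  apply kad_sqrt
  · show star _ = _
    rw [star_sub, star_mul, hsa x hx, hsa (x*x) (by simp [hx])]
  · intro z hz
    have e : P (x * x) - P x * P x = ((Q (x*x) - Q x * Q x : S) : M) := rfl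
    rw [e, ← StarSubalgebra.spectrum_eq (hS := hScl)] at hz
    obtain ⟨χ, rfl⟩ := WeakDual.CharacterSpace.mem_spectrum_iff_exists.1 hz
    set r := (χ (Q x)).re with hr
    have h := hχ χ (x - (r:ℂ) • 1) (by simp [hx])
    have e2 : (x - (r:ℂ) • 1) * (x - (r:ℂ) • 1) = x * x - (2 * r:ℂ) • x + ((r:ℂ)*r) • 1 := by
      simp only [sub_mul, mul_sub, smul_mul_assoc, mul_smul_comm, one_mul, mul_one, smul_sub]
      module
    rw [e2] at h
    have hr' : χ (Q x) = (r : ℂ) := hreal χ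
    simp only [map_sub, map_add, map_smul, map_mul, hQ1, map_one, hr'] at h ⊢
    simp at h ⊢
    linarith

theorem kad_trace (τ : M →ₗ[ℂ] ℂ) 
    (htr : ∀ x y : M, τ (x * y) = τ (y * x))
    (hτpos : ∀ x : M, 0 ≤ τ (star x * x))
    (N : StarSubalgebra ℂ M) (hNab : ∀ x ∈ N, ∀ y ∈ N, x * y = y * x)
    (P : M →ₗ[ℂ] M) (hP1 : P 1 = 1)
    (hPpos : ∀ x : M, (∃ y, x = star y * y) → ∃ y, P x = star y * y)
    (hPtr : ∀ x : M, τ (P x) = τ x)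
    (hPrange : ∀ x : M, P x ∈ N) (hPid : ∀ x ∈ N, P x = x)
    (x : M) (hx : star x = x) (c : M) (hc : star c = c) (hcN : c ∈ N) :
    (τ (c * x)).re = (τ (c * P x)).re := by
  have key : ∀ t : ℝ, 0 ≤ ((τ (x*x)).re - (τ (P x * P x)).re)
      + t * (2 * ((τ (c * x)).re - (τ (c * P x)).re)) := by
    intro t
    obtain ⟨y, hy⟩ := kad_schwarz N hNab P hP1 hPpos hPrange (x + (t:ℂ) • c) (by simp [hx, hc])
    have h := hτpos y
    rw [← hy, map_sub, hPtr, map_add, map_smul, hPid c hcN] at h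
    simp only [add_mul, mul_add, smul_mul_assoc, mul_smul_comm, map_add, map_smul] at h
    rw [htr x c, htr (P x) c] at h
    have := (Complex.le_def.1 h).1
    simp at this
    linarith
  by_contra hne
  set d := (τ (c * x)).re - (τ (c * P x)).re with hd
  have hd0 : d ≠ 0 := fun h => hne (by linarith)
  have := key (-((τ (x*x)).re - (τ (P x * P x)).re + 1) / (2*d))
  rw [div_mul_cancel₀ _ (by simpa using hd0)] at this
  linarith
end Kad

section Calc
open MvPolynomial

theorem calc_exists {M : Type*} [CStarAlgebra M] {n : ℕ} (b : Fin n → M)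
    (hbsa : ∀ i, star (b i) = b i) (hbcomm : ∀ i j, b i * b j = b j * b i) :
    ∃ Φ : MvPolynomial (Fin n) ℝ →ₐ[ℝ] M, (∀ i, Φ (X i) = b i) ∧ (∀ p, star (Φ p) = Φ p) ∧
      (∀ e : Fin n → ℕ, Φ (∏ i, X i ^ e i) = (List.ofFn fun i => b i ^ e i).prod) := by
  let A := Algebra.adjoin ℝ (Set.range b)
  let _ : CommRing A := Algebra.adjoinCommRingOfComm ℝ (by
    rintro _ ⟨i, rfl⟩ _ ⟨j, rfl⟩; exact hbcomm i j)
  let c : Fin n → A := fun i => ⟨b i, Algebra.subset_adjoin ⟨i, rfl⟩⟩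
  let Φ : MvPolynomial (Fin n) ℝ →ₐ[ℝ] M := A.val.comp (aeval c)
  have hX : ∀ i, Φ (X i) = b i := fun i => by simp [Φ, c]
  refine ⟨Φ, hX, ?_, ?_⟩
  · intro p
    induction p using MvPolynomial.induction_on with
    | C a => 
      rw [← algebraMap_eq, AlgHom.commutes, Algebra.algebraMap_eq_smul_one]; simp
    | add p q hp hq => rw [map_add, star_add, hp, hq]
    | mul_X p i hp => 
      rw [map_mul, star_mul, hp, hX, hbsa, ← hX, ← map_mul, ← map_mul, mul_comm]
  · intro e
    rw [← List.prod_ofFn, map_list_prod, List.map_ofFn]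
    congr 2
    ext i
    simp [hX]

theorem calc_mem {M : Type*} [CStarAlgebra M] {n : ℕ} (b : Fin n → M)
    (N : StarSubalgebra ℂ M) (hb : ∀ i, b i ∈ N)
    (Φ : MvPolynomial (Fin n) ℝ →ₐ[ℝ] M) (hX : ∀ i, Φ (X i) = b i) (p) : Φ p ∈ N := by
  induction p using MvPolynomial.induction_on with
    | C a => 
      rw [← algebraMap_eq, AlgHom.commutes, Algebra.algebraMap_eq_smul_one, ← Complex.coe_smul]
      exact N.smul_mem (one_mem _) _
    | add p q hp hq => rw [map_add]; exact add_mem hp hq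
    | mul_X p i hp => rw [map_mul, hX]; exact mul_mem hp (hb i)

theorem calc_integrable {n : ℕ} {μ : Measure (EuclideanSpace ℝ (Fin n))} [IsProbabilityMeasure μ]
    {K : Set (EuclideanSpace ℝ (Fin n))} (hK : IsCompact K) (hμ : μ Kᶜ = 0)
    {f : EuclideanSpace ℝ (Fin n) → ℝ} (hf : ContinuousOn f K) : Integrable f μ := by
  have h := hf.integrableOn_compact (μ := μ) hK
  rwa [IntegrableOn, Measure.restrict_eq_self_of_ae_mem (s := K) (by exact hμ)] at h

theorem calc_cont {n : ℕ} (p : MvPolynomial (Fin n) ℝ) :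
    Continuous fun x : EuclideanSpace ℝ (Fin n) => eval (fun i => x i) p :=
  (MvPolynomial.continuous_eval p).comp (by fun_prop)

theorem calc_trace {M : Type*} [CStarAlgebra M] {n : ℕ} (b : Fin n → M) (τ : M →ₗ[ℂ] ℂ)
    {μ : Measure (EuclideanSpace ℝ (Fin n))} [IsProbabilityMeasure μ]
    {K : Set (EuclideanSpace ℝ (Fin n))} (hK : IsCompact K) (hμ : μ Kᶜ = 0)
    (hm : ∀ e : Fin n → ℕ,
      τ ((List.ofFn fun i => b i ^ e i).prod) = ((∫ x, ∏ i, (x i) ^ e i ∂μ : ℝ) : ℂ))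
    (Φ : MvPolynomial (Fin n) ℝ →ₐ[ℝ] M) 
    (hΦ : ∀ e : Fin n → ℕ, Φ (∏ i, X i ^ e i) = (List.ofFn fun i => b i ^ e i).prod)
    (p : MvPolynomial (Fin n) ℝ) : 
    τ (Φ p) = ((∫ x, eval (fun i => x i) p ∂μ : ℝ) : ℂ) := by
  induction p using MvPolynomial.induction_on' with
  | monomial u a => 
    have : monomial u a = a • ∏ i, (X i : MvPolynomial (Fin n) ℝ) ^ u i := by
      rw [monomial_eq, Finsupp.prod_fintype _ _ (by simp), smul_eq_C_mul]
    rw [this, map_smul, hΦ, ← Complex.coe_smul, map_smul, hm]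
    simp [integral_const_mul]
  | add p q hp hq =>
    rw [map_add, map_add, hp, hq, ← Complex.ofReal_add, ← integral_add]
    · simp
    · exact calc_integrable hK hμ (calc_cont p).continuousOn
    · exact calc_integrable hK hμ (calc_cont q).continuousOn

theorem calc_sw {n : ℕ} {K : Set (EuclideanSpace ℝ (Fin n))} (hK : IsCompact K)
    {f : EuclideanSpace ℝ (Fin n) → ℝ} (hf : ContinuousOn f K) {ε : ℝ} (hε : 0 < ε) :
    ∃ p : MvPolynomial (Fin n) ℝ, ∀ x ∈ K, |eval (fun i => x i) p - f x| < ε := by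
  have : CompactSpace K := isCompact_iff_compactSpace.1 hK
  let ψ : MvPolynomial (Fin n) ℝ →ₐ[ℝ] C(K, ℝ) :=
    aeval (fun i => (⟨fun x => x.1 i, by fun_prop⟩ : C(K, ℝ)))
  have hψ : ∀ p (x : K), ψ p x = eval (fun i => x.1 i) p := by
    intro p x
    induction p using MvPolynomial.induction_on with
    | C a => simp [ψ]
    | add p q hp hq => simp [hp, hq]
    | mul_X p i hp => simp [hp]; simp [ψ]
  obtain ⟨⟨g, p, rfl⟩, hg⟩ :=
    ContinuousMap.exists_mem_subalgebra_near_continuous_of_separatesPoints ψ.range (by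
      intro x y hxy
      have : ∃ i, x.1 i ≠ y.1 i := by
        by_contra! h
        exact hxy (Subtype.ext (PiLp.ext h))
      obtain ⟨i, hi⟩ := this
      refine ⟨_, ⟨ψ (X i), ⟨X i, rfl⟩, rfl⟩, ?_⟩
      simpa [hψ] using hi) (K.domRestrict f) hf.domRestrict ε hε
  refine ⟨p, fun x hx => ?_⟩
  have := hg ⟨x, hx⟩
  rw [← hψ p ⟨x, hx⟩]
  exact this

/-- squares of polynomials approximate nonnegative functions -/
theorem calc_sq {n : ℕ} {K : Set (EuclideanSpace ℝ (Fin n))} (hK : IsCompact K)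
    {f : EuclideanSpace ℝ (Fin n) → ℝ} (hf : ContinuousOn f K) (h0 : ∀ x ∈ K, 0 ≤ f x)
    {ε : ℝ} (hε : 0 < ε) :
    ∃ p : MvPolynomial (Fin n) ℝ, ∀ x ∈ K, |eval (fun i => x i) p ^ 2 - f x| ≤ ε := by
  obtain ⟨C, hC⟩ := hK.exists_bound_of_continuousOn hf.sqrt
  set D := max C 1
  have hD : 1 ≤ D := le_max_right _ _
  obtain ⟨p, hp⟩ := calc_sw hK hf.sqrt (ε := min 1 (ε / (3 * D))) (by positivity)
  refine ⟨p, fun x hx => ?_⟩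
  have h1 := hp x hx
  have h2 : |√(f x)| ≤ D := (hC x hx).trans (le_max_left _ _)
  set u := √(f x) with hu
  set t := eval (fun i => x i) p
  have h3 : f x = u ^ 2 := (Real.sq_sqrt (h0 x hx)).symm
  have h4 : |t - u| ≤ 1 := (h1.trans_le (min_le_left _ _)).le
  have h5 : |t - u| ≤ ε / (3 * D) := (h1.trans_le (min_le_right _ _)).le
  have h6 : |t + u| ≤ 3 * D := by
    rw [abs_le] at *; constructor <;> linarith
  rw [h3, show t ^ 2 - u ^ 2 = (t - u) * (t + u) by ring, abs_mul]
  calc _ ≤ ε / (3 * D) * (3 * D) := by gcongr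
    _ = ε := by field_simp

theorem calc_int_le {n : ℕ} {μ : Measure (EuclideanSpace ℝ (Fin n))} [IsProbabilityMeasure μ]
    {K : Set (EuclideanSpace ℝ (Fin n))} (hK : IsCompact K) (hμ : μ Kᶜ = 0)
    {f g : EuclideanSpace ℝ (Fin n) → ℝ} (hf : ContinuousOn f K) (hg : ContinuousOn g K) (c : ℝ)
    (h : ∀ x ∈ K, f x ≤ g x + c) : ∫ x, f x ∂μ ≤ ∫ x, g x ∂μ + c := by
  have h1 := calc_integrable hK hμ hf
  have h2 := calc_integrable hK hμ hg
  calc ∫ x, f x ∂μ ≤ ∫ x, (g x + c) ∂μ := by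
        refine integral_mono_ae h1 (h2.add (integrable_const c)) ?_
        have : ∀ᵐ x ∂μ, x ∈ K := hμ
        filter_upwards [this] with x hx using h x hx
    _ = _ := by rw [integral_add h2 (integrable_const c)]; simp
end Calc

section Jensen
open MvPolynomial

theorem jen_sqrt_le {n : ℕ} {μ : Measure (EuclideanSpace ℝ (Fin n))} [IsProbabilityMeasure μ]
    {K : Set (EuclideanSpace ℝ (Fin n))} (hK : IsCompact K) (hμ : μ Kᶜ = 0)
    (p : MvPolynomial (Fin n) ℝ) (c : ℝ) (h : ∀ x ∈ K, |eval (fun i => x i) p| ≤ c) :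
    ∫ x, (eval (fun i => x i) p) ^ 2 ∂μ ≤ c ^ 2 := by
  have := calc_int_le hK hμ ((calc_cont p).pow 2).continuousOn
    (continuousOn_const (c := (0:ℝ))) (c ^ 2) (fun x hx => by
      have := h x hx
      show (eval (fun i => x i) p) ^ 2 ≤ 0 + c ^ 2
      rw [zero_add]
      exact sq_le_sq' (abs_le.1 this).1 (abs_le.1 this).2)
  simpa using this

theorem jen_main {n : ℕ} (μa μb : Measure (EuclideanSpace ℝ (Fin n)))
    [IsProbabilityMeasure μa] [IsProbabilityMeasure μb]
    {Ka Kb : Set (EuclideanSpace ℝ (Fin n))} (hKa : IsCompact Ka) (hμa : μa Kaᶜ = 0)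
    (hKb : IsCompact Kb) (hμb : μb Kbᶜ = 0)
    (β : MvPolynomial (Fin n) ℝ →ₗ[ℝ] MvPolynomial (Fin n) ℝ →ₗ[ℝ] ℝ)
    (hβa : ∀ p, β p 1 = ∫ x, eval (fun i => x i) p ∂μa)
    (hβb : ∀ q, β 1 q = ∫ x, eval (fun i => x i) q ∂μb)
    (hX : ∀ p i, β p (X i) = ∫ x, eval (fun i => x i) (p * X i) ∂μa)
    (hCS : ∀ p q, (β p q) ^ 2 ≤
      (∫ x, (eval (fun i => x i) p) ^ 2 ∂μa) * (∫ x, (eval (fun i => x i) q) ^ 2 ∂μb))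
    (hpos : ∀ t s, 0 ≤ β (t ^ 2) (s ^ 2))
    (f : EuclideanSpace ℝ (Fin n) → ℝ) (hf : Continuous f) (hfc : ConvexOn ℝ Set.univ f) :
    ∫ x, f x ∂μa ≤ ∫ x, f x ∂μb := by
  -- boundedness of the form
  have hbd : ∀ p q A B, 0 ≤ A → 0 ≤ B → (∀ x ∈ Ka, |eval (fun i => x i) p| ≤ A) →
      (∀ x ∈ Kb, |eval (fun i => x i) q| ≤ B) → |β p q| ≤ A * B := by
    intro p q A B hA hB hp hq
    apply abs_le_of_sq_le_sq' _ (by positivity) |> abs_le.2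
    refine (hCS p q).trans ?_
    rw [mul_pow]
    gcongr
    · exact jen_sqrt_le hKa hμa p A hp
    · exact jen_sqrt_le hKb hμb q B hq
  have hpbd : ∀ (K : Set (EuclideanSpace ℝ (Fin n))), IsCompact K →
      ∀ p : MvPolynomial (Fin n) ℝ, ∃ C, 0 ≤ C ∧ ∀ x ∈ K, |eval (fun i => x i) p| ≤ C := by
    intro K hK p
    obtain ⟨C, hC⟩ := hK.exists_bound_of_continuousOn (calc_cont p).continuousOn
    exact ⟨max C 0, le_max_right _ _, fun x hx => (hC x hx).trans (le_max_left _ _)⟩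
  -- positivity of the form
  have hpos2 : ∀ t q, (∀ x ∈ Kb, 0 ≤ eval (fun i => x i) q) → 0 ≤ β (t ^ 2) q := by
    intro t q hq
    obtain ⟨C, hC0, hC⟩ := hpbd Ka hKa (t ^ 2)
    refine le_of_forall_pos_le_add fun ε hε => ?_
    obtain ⟨s, hs⟩ := calc_sq hKb (calc_cont q).continuousOn hq (ε := ε / (C + 1)) (by positivity)
    have h1 := hbd (t ^ 2) (s ^ 2 - q) C (ε / (C + 1)) hC0 (by positivity) hC
      (fun x hx => by simpa using hs x hx)
    have h2 := hpos t s
    have h3 : C * (ε / (C + 1)) ≤ ε := by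
      rw [mul_div_assoc', div_le_iff₀ (by positivity)]; nlinarith
    rw [map_sub] at h1
    have := (abs_le.1 h1).2
    linarith
  -- affine functions
  have haff : ∀ (l : EuclideanSpace ℝ (Fin n) →L[ℝ] ℝ) (c : ℝ), ∃ q : MvPolynomial (Fin n) ℝ,
      (∀ x : EuclideanSpace ℝ (Fin n), eval (fun i => x i) q = l x + c) ∧
      ∀ p, β p q = ∫ x, eval (fun i => x i) (p * q) ∂μa := by
    intro l c
    refine ⟨∑ i, l (EuclideanSpace.single i 1) • X i + c • 1, ?_, ?_⟩
    · intro x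
      have hx : x = ∑ i, x i • EuclideanSpace.single i (1:ℝ) := by
        ext j
        simp [Finset.sum_apply, Pi.single_apply]
      conv_rhs => rw [hx]
      simp [map_sum, smul_eval, mul_comm]
    · intro p
      rw [map_add, map_sum, map_smul, hβa]
      simp only [map_smul, hX, mul_add, Finset.mul_sum, map_add, map_sum, mul_smul_comm, smul_eval,
        mul_one, smul_eq_mul]
      rw [integral_add, integral_finsetSum]
      · simp only [integral_const_mul]
      · intro i _
        exact (calc_integrable hKa hμa (calc_cont (p * X i)).continuousOn).const_mul _
      · exact integrable_finsetSum _ fun i _ =>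
          (calc_integrable hKa hμa (calc_cont (p * X i)).continuousOn).const_mul _
      · exact (calc_integrable hKa hμa (calc_cont p).continuousOn).const_mul _
  refine le_of_forall_pos_le_add fun ε' hε' => ?_
  obtain ⟨ε, hε, rfl⟩ : ∃ ε, 0 < ε ∧ ε' = 5 * ε := ⟨ε' / 5, by positivity, by ring⟩
  -- the polynomial majorant
  obtain ⟨q, hq⟩ : ∃ q : MvPolynomial (Fin n) ℝ, ∀ x ∈ Kb,
      f x ≤ eval (fun i => x i) q ∧ eval (fun i => x i) q ≤ f x + ε := by
    obtain ⟨q, hq⟩ := calc_sw hKb (f := fun x => f x + ε / 2)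
      (by fun_prop) (ε := ε / 2) (by positivity)
    refine ⟨q, fun x hx => ?_⟩
    have := abs_lt.1 (hq x hx)
    constructor <;> linarith
  -- affine minorants
  have hmin : ∀ x : EuclideanSpace ℝ (Fin n), ∃ l : MvPolynomial (Fin n) ℝ,
      (∀ y : EuclideanSpace ℝ (Fin n), eval (fun i => y i) l ≤ f y) ∧
      f x - ε < eval (fun i => x i) l ∧
      ∀ p, β p l = ∫ x, eval (fun i => x i) (p * l) ∂μa := by
    intro x
    obtain ⟨l, c, h1, h2⟩ := ConvexOn.exists_affine_le_of_lt (𝕜 := ℝ) (x := x) (a := f x - ε / 2)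
      (Set.mem_univ _) (by linarith) isClosed_univ (hf.lowerSemicontinuous.lowerSemicontinuousOn _) hfc
    obtain ⟨p, hp, hp'⟩ := haff l c
    refine ⟨p, fun y => ?_, ?_, hp'⟩
    · rw [hp]; simpa using h1 ⟨y, trivial⟩
    · rw [hp]
      have : l x + c = f x - ε / 2 := by simpa using h2
      linarith
  choose L hL1 hL2 hL3 using hmin
  obtain ⟨T, -, hT⟩ := hKa.elim_nhds_subcover
    (fun x => {y | f y - ε < eval (fun i => y i) (L x)}) (fun x _ => by
      apply IsOpen.mem_nhds
      · exact isOpen_lt (by fun_prop) (calc_cont _)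
      · exact hL2 x)
  -- partition of unity
  let w : EuclideanSpace ℝ (Fin n) → EuclideanSpace ℝ (Fin n) → ℝ :=
    fun k x => max 0 (eval (fun i => x i) (L k) - f x + 2 * ε)
  let W : EuclideanSpace ℝ (Fin n) → ℝ := fun x => ∑ k ∈ T, w k x
  have hw0 : ∀ k x, 0 ≤ w k x := fun k x => le_max_left _ _
  have hwc : ∀ k, Continuous (w k) := fun k =>
    continuous_const.max (((calc_cont (L k)).sub hf).add continuous_const)
  have hWc : Continuous W := continuous_finsetSum _ fun k _ => hwc k
  have hWpos : ∀ x ∈ Ka, 0 < W x := by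
    intro x hx
    have := hT hx
    simp only [Set.mem_iUnion] at this
    obtain ⟨k, hk, hkx⟩ := this
    refine Finset.sum_pos' (fun k _ => hw0 k x) ⟨k, hk, ?_⟩
    have hkx' : f x - ε < eval (fun i => x i) (L k) := hkx
    exact lt_max_of_lt_right (by linarith)
  have hφc : ∀ k, ContinuousOn (fun x => w k x / W x) Ka := fun k =>
    (hwc k).continuousOn.div hWc.continuousOn fun x hx => (hWpos x hx).ne'
  have hφ0 : ∀ k, ∀ x ∈ Ka, 0 ≤ w k x / W x := fun k x hx => div_nonneg (hw0 k x) (hWpos x hx).le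
  have hφ1 : ∀ x ∈ Ka, ∑ k ∈ T, w k x / W x = 1 := by
    intro x hx
    rw [← Finset.sum_div]; exact div_self (hWpos x hx).ne'
  have hφL : ∀ x ∈ Ka, f x - 2 * ε ≤ ∑ k ∈ T, w k x / W x * eval (fun i => x i) (L k) := by
    intro x hx
    calc f x - 2 * ε = ∑ k ∈ T, w k x / W x * (f x - 2 * ε) := by
          rw [← Finset.sum_mul, hφ1 x hx, one_mul]
      _ ≤ _ := by
          refine Finset.sum_le_sum fun k _ => ?_
          rcases le_or_gt (eval (fun i => x i) (L k) - f x + 2 * ε) 0 with h | h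
          · have : w k x = 0 := max_eq_left h
            simp [this]
          · exact mul_le_mul_of_nonneg_left (by linarith) (hφ0 k x hx)
  -- constants
  choose CL hCL0 hCL using fun k => hpbd Ka hKa (L k)
  obtain ⟨Q, hQ0, hQ⟩ := hpbd Kb hKb q
  set D : ℝ := ∑ k ∈ T, (CL k + Q) + 1 with hD
  have hsum0 : 0 ≤ ∑ k ∈ T, (CL k + Q) := Finset.sum_nonneg fun k _ => by
    have := hCL0 k; positivity
  have hDpos : 0 < D := by positivity
  set η := ε / D with hη
  have hη0 : 0 < η := by positivity
  have hηs : (∑ k ∈ T, (CL k + Q)) * η ≤ ε := by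
    rw [hη, mul_div_assoc', div_le_iff₀ hDpos]; nlinarith
  have hηL : ∑ k ∈ T, η * CL k ≤ ε := by
    refine le_trans ?_ hηs
    rw [Finset.sum_mul]
    exact Finset.sum_le_sum fun k _ => by nlinarith
  have hηQ : (∑ k ∈ T, η) * Q ≤ ε := by
    refine le_trans ?_ hηs
    rw [Finset.sum_mul, Finset.sum_mul]
    exact Finset.sum_le_sum fun k _ => by nlinarith [mul_nonneg hη0.le (hCL0 k)]
  choose t ht using fun k => calc_sq hKa (hφc k) (hφ0 k) hη0
  have s1 : ∫ x, f x ∂μa ≤ ∫ x, eval (fun i => x i) (∑ k ∈ T, t k ^ 2 * L k) ∂μa + 3 * ε := by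
    refine calc_int_le hKa hμa hf.continuousOn (calc_cont _).continuousOn _ fun x hx => ?_
    have h1 := hφL x hx
    have h2 : ∑ k ∈ T, w k x / W x * eval (fun i => x i) (L k) ≤
        ∑ k ∈ T, ((eval (fun i => x i) (t k)) ^ 2 * eval (fun i => x i) (L k) + η * CL k) := by
      refine Finset.sum_le_sum fun k _ => ?_
      have h3 : |((eval (fun i => x i) (t k)) ^ 2 - w k x / W x) * eval (fun i => x i) (L k)|
          ≤ η * CL k := by
        rw [abs_mul]
        exact mul_le_mul (ht k x hx) (hCL k x hx) (abs_nonneg _) hη0.le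
      have := (abs_le.1 h3).1
      linarith
    rw [Finset.sum_add_distrib] at h2
    simp only [map_sum, map_mul, map_pow]
    linarith
  have s2 : ∫ x, eval (fun i => x i) (∑ k ∈ T, t k ^ 2 * L k) ∂μa = ∑ k ∈ T, β (t k ^ 2) (L k) := by
    simp only [hL3, map_sum]
    rw [integral_finsetSum]
    exact fun k _ => calc_integrable hKa hμa (calc_cont _).continuousOn
  have s3 : ∑ k ∈ T, β (t k ^ 2) (L k) ≤ ∑ k ∈ T, β (t k ^ 2) q := by
    refine Finset.sum_le_sum fun k _ => ?_
    have := hpos2 (t k) (q - L k) fun x hx => by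
      rw [map_sub]
      linarith [hL1 k x, (hq x hx).1]
    rw [map_sub] at this
    linarith
  have s4 : ∑ k ∈ T, β (t k ^ 2) q ≤ β 1 q + ε := by
    have h := hbd (∑ k ∈ T, t k ^ 2 - 1) q (∑ k ∈ T, η) Q (Finset.sum_nonneg fun _ _ => hη0.le) hQ0
      (fun x hx => by
        rw [map_sub, map_sum, map_one, ← hφ1 x hx, ← Finset.sum_sub_distrib]
        refine (Finset.abs_sum_le_sum_abs _ _).trans (Finset.sum_le_sum fun k _ => ?_)
        rw [map_pow]; exact ht k x hx) hQ
    rw [map_sub, map_sum, LinearMap.sub_apply, LinearMap.sum_apply] at h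
    linarith [(abs_le.1 h).2]
  have s5 : β 1 q ≤ ∫ x, f x ∂μb + ε := by
    rw [hβb]
    exact calc_int_le hKb hμb (calc_cont _).continuousOn hf.continuousOn _ fun x hx => (hq x hx).2
  linarith
end Jensen

section Assembly
open MvPolynomial

theorem jen_vN {M : Type*} [CStarAlgebra M]
    (τ : M →ₗ[ℂ] ℂ) (hτ1 : τ 1 = 1)
    (htr : ∀ x y : M, τ (x * y) = τ (y * x))
    (hτpos : ∀ x : M, 0 ≤ τ (star x * x))
    (N : StarSubalgebra ℂ M) (hNab : ∀ x ∈ N, ∀ y ∈ N, x * y = y * x)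
    (P : M →ₗ[ℂ] M) (hP1 : P 1 = 1)
    (hPpos : ∀ x : M, (∃ y, x = star y * y) → ∃ y, P x = star y * y)
    (hPtr : ∀ x : M, τ (P x) = τ x)
    (hPrange : ∀ x : M, P x ∈ N) (hPid : ∀ x ∈ N, P x = x)
    (n : ℕ) (b : Fin n → M)
    (hbsa : ∀ i, star (b i) = b i)
    (hbcomm : ∀ i j, b i * b j = b j * b i)
    (μa μb : Measure (EuclideanSpace ℝ (Fin n)))
    [IsProbabilityMeasure μa] [IsProbabilityMeasure μb]
    {Ka Kb : Set (EuclideanSpace ℝ (Fin n))} (hKa : IsCompact Ka) (hKa0 : μa Kaᶜ = 0)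
    (hKb : IsCompact Kb) (hKb0 : μb Kbᶜ = 0)
    (hμa : ∀ e : Fin n → ℕ,
      τ ((List.ofFn fun i => P (b i) ^ e i).prod) =
        ((∫ x, ∏ i, (x i) ^ e i ∂μa : ℝ) : ℂ))
    (hμb : ∀ e : Fin n → ℕ,
      τ ((List.ofFn fun i => b i ^ e i).prod) =
        ((∫ x, ∏ i, (x i) ^ e i ∂μb : ℝ) : ℂ)) :
    ∀ f : EuclideanSpace ℝ (Fin n) → ℝ, Continuous f → ConvexOn ℝ Set.univ f →
      ∫ x, f x ∂μa ≤ ∫ x, f x ∂μb := by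
  intro f hf hfc
  obtain ⟨Φb, hbX, hbstar, hbmon⟩ := calc_exists b hbsa hbcomm
  obtain ⟨Φa, haX, hastar, hamon⟩ := calc_exists (fun i => P (b i))
    (fun i => kad_pres_sa P hPpos _ (hbsa i))
    (fun i j => hNab _ (hPrange _) _ (hPrange _))
  have hamem := calc_mem (fun i => P (b i)) N (fun i => hPrange _) Φa haX
  have hatr := calc_trace (fun i => P (b i)) τ hKa hKa0 hμa Φa hamon
  have hbtr := calc_trace b τ hKb hKb0 hμb Φb hbmon
  have hre : ∀ (c : ℝ) (x : M), (τ (c • x)).re = c * (τ x).re := by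
    intro c x
    rw [← Complex.coe_smul, map_smul]; simp
  let β : MvPolynomial (Fin n) ℝ →ₗ[ℝ] MvPolynomial (Fin n) ℝ →ₗ[ℝ] ℝ :=
    LinearMap.mk₂ ℝ (fun p q => (τ (Φa p * Φb q)).re)
      (fun p p' q => by simp [add_mul])
      (fun c p q => by rw [map_smul, smul_mul_assoc, hre, smul_eq_mul])
      (fun p q q' => by simp [mul_add])
      (fun c p q => by rw [map_smul, mul_smul_comm, hre, smul_eq_mul])
  have hβ : ∀ p q, β p q = (τ (Φa p * Φb q)).re := fun p q => rfl
  refine jen_main μa μb hKa hKa0 hKb hKb0 β ?_ ?_ ?_ ?_ ?_ f hf hfc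
  · intro p
    rw [hβ, map_one, mul_one, hatr]; simp
  · intro q
    rw [hβ, map_one, one_mul, hbtr]; simp
  · intro p i
    rw [hβ, hbX, kad_trace τ htr hτpos N hNab P hP1 hPpos hPtr hPrange hPid (b i) (hbsa i) (Φa p)
      (hastar p) (hamem p), ← haX, ← map_mul, hatr]
    simp
  · intro p q
    have ea : ∫ x, (eval (fun i => x i) p) ^ 2 ∂μa = (τ (Φa p * Φa p)).re := by
      rw [← map_mul, hatr]; simp [sq]
    have eb : ∫ x, (eval (fun i => x i) q) ^ 2 ∂μb = (τ (Φb q * Φb q)).re := by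
      rw [← map_mul, hbtr]; simp [sq]
    rw [hβ, ea, eb]
    have key : ∀ r : ℝ, 0 ≤ (τ (Φa p * Φa p)).re * (r * r) + (2 * (τ (Φa p * Φb q)).re) * r
        + (τ (Φb q * Φb q)).re := by
      intro r
      have h := hτpos ((r:ℂ) • Φa p + Φb q)
      rw [star_add, star_smul, hastar, hbstar] at h
      simp only [add_mul, mul_add, smul_mul_assoc, mul_smul_comm, map_add, map_smul] at h
      rw [htr (Φb q) (Φa p)] at h
      have := (Complex.le_def.1 h).1
      simp at this
      linarith
    have := discrim_le_zero key
    rw [discrim] at this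
    nlinarith
  · intro t s
    rw [hβ, sq, sq, map_mul Φa, map_mul Φb]
    have h := hτpos (Φa t * Φb s)
    rw [star_mul, hastar, hbstar, mul_assoc, htr] at h
    have := (Complex.le_def.1 h).1
    simpa [mul_assoc] using this
end Assembly

/-- Trace–Jensen inequality for the trace-preserving conditional expectation `P` onto
an abelian subalgebra `N` of a finite von Neumann algebra: for a commuting self-adjoint
family `b₁,…,b_n`, one has `τ(f(P(b₁),…,P(b_n))) ≤ τ(f(b₁,…,b_n))` for every continuous
convex `f : ℝⁿ → ℝ`. Here the traces of the functional calculi are expressed through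
the joint spectral distributions `μa` (of the `P(bᵢ)`) and `μb` (of the `bᵢ`),
characterized as the compactly supported probability measures whose moments match the
traces of the corresponding monomials. -/
theorem conditional_expectation_trace_jensen
    {M : Type*} [NormedRing M] [StarRing M] [CStarRing M] [NormedAlgebra ℂ M]
    [StarModule ℂ M] [CompleteSpace M]
    (τ : M →ₗ[ℂ] ℂ) (hτ1 : τ 1 = 1)
    (htr : ∀ x y : M, τ (x * y) = τ (y * x))
    (hτpos : ∀ x : M, 0 ≤ τ (star x * x))
    (hτfaith : ∀ x : M, τ (star x * x) = 0 → x = 0)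
    (N : StarSubalgebra ℂ M) (hNab : ∀ x ∈ N, ∀ y ∈ N, x * y = y * x)
    (P : M →ₗ[ℂ] M) (hP1 : P 1 = 1)
    (hPpos : ∀ x : M, (∃ y, x = star y * y) → ∃ y, P x = star y * y)
    (hPtr : ∀ x : M, τ (P x) = τ x)
    (hPrange : ∀ x : M, P x ∈ N) (hPid : ∀ x ∈ N, P x = x)
    (n : ℕ) (b : Fin n → M)
    (hbsa : ∀ i, b i = star (b i))
    (hbcomm : ∀ i j, b i * b j = b j * b i)
    (μa μb : Measure (EuclideanSpace ℝ (Fin n)))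
    [IsProbabilityMeasure μa] [IsProbabilityMeasure μb]
    (hμac : ∃ K, IsCompact K ∧ μa Kᶜ = 0) (hμbc : ∃ K, IsCompact K ∧ μb Kᶜ = 0)
    (hμa : ∀ e : Fin n → ℕ,
      τ ((List.ofFn fun i => P (b i) ^ e i).prod) =
        ((∫ x, ∏ i, (x i) ^ e i ∂μa : ℝ) : ℂ))
    (hμb : ∀ e : Fin n → ℕ,
      τ ((List.ofFn fun i => b i ^ e i).prod) =
        ((∫ x, ∏ i, (x i) ^ e i ∂μb : ℝ) : ℂ)) :
    ∀ f : EuclideanSpace ℝ (Fin n) → ℝ, Continuous f → ConvexOn ℝ Set.univ f →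
      ∫ x, f x ∂μa ≤ ∫ x, f x ∂μb := by
  
  let _ : CStarAlgebra M := { (inferInstance : NormedRing M), (inferInstance : StarRing M),
    (inferInstance : NormedAlgebra ℂ M) with
    toCompleteSpace := inferInstance
    toCStarRing := inferInstance
    toStarModule := inferInstance }
  obtain ⟨Ka, hKa, hKa0⟩ := hμac
  obtain ⟨Kb, hKb, hKb0⟩ := hμbc
  exact jen_vN τ hτ1 htr hτpos N hNab P hP1 hPpos hPtr hPrange hPid n b (fun i => (hbsa i).symm)
    hbcomm μa μb hKa hKa0 hKb hKb0 hμa hμb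
end

section
/- Let M be a II₁ factor and let (a₁,…,a_n), (b₁,…,b_n) be commuting families of self-adjoint elements. If (a₁,…,a_n) lies in the coordinate-wise strong-operator-topology closure of the joint unitary orbit {(u* b₁ u, …, u* b_n u) : u ∈ U(M)}, then it lies in the coordinate-wise norm closure of that orbit. -/
open scoped ComplexOrder

set_option linter.unusedSectionVars false

namespace SOTU

section abstractPart

variable {A : Type*} [CStarAlgebra A]
variable {H : Type*} [NormedAddCommGroup H] [InnerProductSpace ℂ H] [CompleteSpace H]

/-- extension order on partial isometries -/
def Ext (v w : A) : Prop := w * star v = v * star v ∧ star v * w = star v * v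

/-- The facts about a factor acting on `H` which are used below. -/
structure VNData (ρ : A →⋆ₐ[ℂ] (H →L[ℂ] H)) : Prop where
  rp : ∀ y : A, IsSelfAdjoint y → ∃ p : A, IsStarProjection p ∧ p * y = y ∧
    (∀ z : A, z * y = 0 → z * p = 0) ∧ ∀ ξ, ρ p ξ ∈ closure (Set.range (fun ζ => ρ y ζ))
  chain : ∀ c : Set A, c.Nonempty → IsChain Ext c → (∀ v ∈ c, v * star v * v = v) →
    ∃ w : A, (∀ v ∈ c, Ext v w) ∧ ∀ ξ, ρ w ξ ∈ closure ((fun v => ρ v ξ) '' c)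
  fac : ∀ p q : A, IsStarProjection p → IsStarProjection q →
    (∀ x, q * x * p = 0) → p = 0 ∨ q = 0

/-- spectral projection of `x` for `(c, ∞)` -/
structure IsCut (ρ : A →⋆ₐ[ℂ] (H →L[ℂ] H)) (x : A) (c : ℝ) (p : A) : Prop where
  proj : IsStarProjection p
  mulY : p * cfc (fun t : ℝ => max (t - c) 0) x = cfc (fun t : ℝ => max (t - c) 0) x
  kill : ∀ z : A, z * cfc (fun t : ℝ => max (t - c) 0) x = 0 → z * p = 0
  dense : ∀ ξ, ρ p ξ ∈ closure (Set.range (fun ζ => ρ (cfc (fun t : ℝ => max (t - c) 0) x) ζ))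

variable {ρ : A →⋆ₐ[ℂ] (H →L[ℂ] H)}

theorem VNData.exists_cut (h : VNData ρ) (x : A) (c : ℝ) : ∃ p, IsCut ρ x c p := by
  obtain ⟨p, h1, h2, h3, h4⟩ := h.rp (cfc (fun t : ℝ => max (t - c) 0) x) (cfc_predicate _ _)
  exact ⟨p, h1, h2, h3, h4⟩

theorem IsCut.sa {x c p} (h : IsCut ρ x c p) : star p = p := h.proj.isSelfAdjoint

theorem IsCut.idem {x c p} (h : IsCut ρ x c p) : p * p = p := h.proj.isIdempotentElem

theorem IsCut.kill_cfc {x c p} (h : IsCut ρ x c p) (f : ℝ → ℝ) (hf : Continuous f)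
    (h0 : ∀ t, c < t → f t = 0) : cfc f x * p = 0 := by
  apply h.kill
  rw [← cfc_mul f _ x (by fun_prop) (by fun_prop)]
  have : (fun t => f t * max (t - c) 0) = fun _ => 0 := by
    funext t
    rcases le_or_gt t c with h | h
    · rw [max_eq_right (by linarith), mul_zero]
    · rw [h0 t h, zero_mul]
  rw [this]; simp

theorem IsCut.mul_cfc {x c p} (h : IsCut ρ x c p) (k : ℝ → ℝ) (hk : Continuous k) :
    p * cfc (fun t => max (t - c) 0 * k t) x = cfc (fun t => max (t - c) 0 * k t) x := by
  rw [cfc_mul (fun t : ℝ => max (t - c) 0) k x (by fun_prop) (by fun_prop), ← mul_assoc, h.mulY]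

theorem IsCut.commute {x c p} (h : IsCut ρ x c p) {z : A} (hz : star z = z)
    (hxz : Commute x z) : Commute p z := by
  have h1 : Commute (cfc (fun t : ℝ => max (t - c) 0) x) z := hxz.cfc_real _
  have h2 : (1 - p) * z * p = 0 := by
    apply h.kill
    rw [mul_assoc, ← h1.eq, ← mul_assoc, sub_mul, h.mulY, one_mul, sub_self, zero_mul]
  have h3 : z * p = p * z * p := by
    rw [sub_mul, sub_mul, one_mul, sub_eq_zero] at h2; exact h2
  have h4 := congrArg star h3
  simp only [star_mul, hz, h.sa] at h4
  show p * z = z * p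
  rw [h4, ← mul_assoc, ← h3]

theorem cut_zero_mul {x c p} (h : IsCut ρ x c p) (hx : IsSelfAdjoint x)
    (hsp : ∀ t ∈ spectrum ℝ x, 0 ≤ t) (hc : 0 ≤ c) {z : A} (hz : z * x = 0) : z * p = 0 := by
  apply h.kill
  rcases hc.eq_or_lt with rfl | hc
  · have : cfc (fun t : ℝ => max (t - 0) 0) x = cfc (fun t : ℝ => t) x := by
      apply cfc_congr
      intro t ht
      simp [hsp t ht]
    rw [this, cfc_id' ℝ x hx, hz]
  · have hk : Continuous (fun t : ℝ => max (t - c) 0 / max t c) := by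
      refine Continuous.div (by fun_prop) (by fun_prop) fun t => ?_
      exact (lt_of_lt_of_le hc (le_max_right _ _)).ne'
    have : (fun t : ℝ => max (t - c) 0) = fun t => t * (max (t - c) 0 / max t c) := by
      funext t
      rcases le_or_gt t c with h | h
      · rw [max_eq_right (by linarith)]; simp
      · rw [max_eq_left h.le]
        have : t ≠ 0 := by linarith
        field_simp
    rw [this, cfc_mul (fun t : ℝ => t) _ x (by fun_prop) hk.continuousOn, cfc_id' ℝ x hx,
      ← mul_assoc, hz, zero_mul]

variable [PartialOrder A] [StarOrderedRing A]

theorem conj_le_conj_proj {p a : A} (hp : star p = p) (ha : 0 ≤ a) : 0 ≤ p * a * p := by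
  have := star_left_conjugate_nonneg ha p
  rwa [hp] at this

theorem IsCut.upper {x c p} (h : IsCut ρ x c p) {δ : ℝ} (hδ : 0 < δ) :
    cfc (fun t : ℝ => min (max (t - c) 0) δ) x ≤ δ • p := by
  by_cases hx : IsSelfAdjoint x
  swap
  · rw [cfc_apply_of_not_predicate x hx]
    exact smul_nonneg hδ.le h.proj.nonneg
  set g := cfc (fun t : ℝ => min (max (t - c) 0) δ) x with hg
  have hgs : star g = g := (cfc_predicate _ _ : IsSelfAdjoint g)
  have h1 : p * g = g := by
    have hk : Continuous (fun t : ℝ => δ / max (t - c) δ) := by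
      refine Continuous.div (by fun_prop) (by fun_prop) fun t => ?_
      exact (lt_of_lt_of_le hδ (le_max_right _ _)).ne'
    have : (fun t : ℝ => min (max (t - c) 0) δ) = fun t => max (t - c) 0 * (δ / max (t - c) δ) := by
      funext t
      rcases le_or_gt (t - c) 0 with h | h
      · rw [max_eq_right h, min_eq_left hδ.le, zero_mul]
      · rw [max_eq_left h.le]
        rcases le_or_gt (t - c) δ with h' | h'
        · rw [min_eq_left h', max_eq_right h']; field_simp
        · rw [min_eq_right h'.le, max_eq_left h'.le]; field_simp
    rw [hg, this]
    exact h.mul_cfc _ hk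
  have h2 : g * p = g := by
    have := congrArg star h1
    rwa [star_mul, hgs, h.sa] at this
  have h3 : g ≤ algebraMap ℝ A δ := by
    exact cfc_le_algebraMap _ _ _ (fun t _ => min_le_right _ _) (by fun_prop) hx
  have h4 := conj_le_conj_proj h.sa (sub_nonneg.2 h3)
  rw [mul_sub, sub_mul, h1, h2, Algebra.algebraMap_eq_smul_one, mul_smul_comm, mul_one,
    smul_mul_assoc, h.idem] at h4
  exact sub_nonneg.1 h4

theorem IsCut.lower {x c c' p} {δ : ℝ} (h : IsCut ρ x c' p) (hc' : c' = c + δ) (hδ : 0 < δ)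
    (hx : IsSelfAdjoint x) :
    δ • p ≤ cfc (fun t : ℝ => min (max (t - c) 0) δ) x := by
  set g := cfc (fun t : ℝ => min (max (t - c) 0) δ) x with hg
  have hgs : star g = g := (cfc_predicate _ _ : IsSelfAdjoint g)
  have h0 : 0 ≤ g := cfc_nonneg fun t _ => le_min (le_max_right _ _) hδ.le
  have h1 : g * p = δ • p := by
    have := h.kill_cfc (fun t => min (max (t - c) 0) δ - δ) (by fun_prop) (by
      intro t ht
      rw [max_eq_left (by linarith), min_eq_right (by linarith), sub_self])
    rw [cfc_sub _ _ x (by fun_prop) (by fun_prop), cfc_const δ x, sub_mul, sub_eq_zero] at this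
    rw [hg, this, Algebra.algebraMap_eq_smul_one, smul_mul_assoc, one_mul]
  have h2 : p * g = δ • p := by
    have := congrArg star h1
    rwa [star_mul, hgs, star_smul, h.sa, star_trivial] at this
  have h3 := conj_le_conj_proj (p := 1 - p) (by rw [star_sub, star_one, h.sa]) h0
  have : (1 - p) * g * (1 - p) = g - δ • p := by
    rw [sub_mul, one_mul, h2, mul_sub, mul_one, sub_mul, h1, smul_mul_assoc, h.idem, sub_self,
      sub_zero]
  rw [this] at h3
  exact sub_nonneg.1 h3

/-- partial layer sums -/
theorem layer {x : A} (hx : IsSelfAdjoint x) {c δ : ℝ} (hδ : 0 < δ) {p : ℕ → A}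
    (hp : ∀ k : ℕ, IsCut ρ x (c + k * δ) (p k)) (m : ℕ) :
    cfc (fun t : ℝ => min (max (t - c) 0) (m * δ)) x ≤ δ • ∑ k ∈ Finset.range m, p k ∧
    δ • ∑ k ∈ Finset.range m, p (k + 1) ≤ cfc (fun t : ℝ => min (max (t - c) 0) (m * δ)) x := by
  induction m with
  | zero =>
    have : (fun t : ℝ => min (max (t - c) 0) ((0 : ℕ) * δ)) = fun _ => 0 := by
      funext t; simp
    rw [this]; simp
  | succ m ih =>
    have : (fun t : ℝ => min (max (t - c) 0) ((m + 1 : ℕ) * δ)) = fun t =>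
        min (max (t - c) 0) (m * δ) + min (max (t - (c + m * δ)) 0) δ := by
      funext t
      have hm : 0 ≤ m * δ := by positivity
      push_cast
      rcases le_or_gt (t - c) 0 with h | h
      · rw [max_eq_right h, max_eq_right (by linarith), min_eq_left hm, min_eq_left hδ.le,
          min_eq_left (by nlinarith)]; simp
      · rw [max_eq_left h.le]
        rcases le_or_gt (t - c) (m * δ) with h' | h'
        · rw [min_eq_left h', max_eq_right (by linarith), min_eq_left hδ.le,
            min_eq_left (by nlinarith)]; simp
        · rw [min_eq_right h'.le, max_eq_left (by linarith)]
          rcases le_or_gt (t - c) (m * δ + δ) with h'' | h''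
          · rw [min_eq_left (by linarith), min_eq_left (by linarith)]; ring
          · rw [min_eq_right (by linarith), min_eq_right (by linarith)]; ring
    rw [this, cfc_add x _ _ (by fun_prop) (by fun_prop), Finset.sum_range_succ,
      Finset.sum_range_succ, smul_add, smul_add]
    refine ⟨add_le_add ih.1 ((hp m).upper hδ), add_le_add ih.2 ((hp (m+1)).lower ?_ hδ hx)⟩
    push_cast; ring

theorem layer_eq {x : A} (hx : IsSelfAdjoint x) {c δ : ℝ} (m : ℕ)
    (hs : ∀ t ∈ spectrum ℝ x, c ≤ t ∧ t ≤ c + m * δ) :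
    cfc (fun t : ℝ => min (max (t - c) 0) (m * δ)) x = x - algebraMap ℝ A c := by
  have : cfc (fun t : ℝ => min (max (t - c) 0) (m * δ)) x = cfc (fun t : ℝ => t - c) x := by
    apply cfc_congr
    intro t ht
    obtain ⟨h1, h2⟩ := hs t ht
    show min (max (t - c) 0) (m * δ) = t - c
    rw [max_eq_left (by linarith), min_eq_left (by linarith)]
  rw [this, cfc_sub _ _ x (by fun_prop) (by fun_prop), cfc_id' ℝ x hx, cfc_const c x hx]

theorem layer_norm {x : A} (hx : IsSelfAdjoint x) {c δ : ℝ} (hδ : 0 < δ) {p : ℕ → A}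
    (hp : ∀ k : ℕ, IsCut ρ x (c + k * δ) (p k)) (m : ℕ)
    (hs : ∀ t ∈ spectrum ℝ x, c ≤ t ∧ t ≤ c + m * δ) :
    ‖δ • ∑ k ∈ Finset.range m, p k - (x - algebraMap ℝ A c)‖ ≤ δ := by
  obtain ⟨h1, h2⟩ := layer hx hδ hp m
  rw [layer_eq hx m hs] at h1 h2
  rw [CStarAlgebra.norm_le_iff_le_algebraMap _ hδ.le (sub_nonneg.2 h1)]
  calc _ ≤ δ • ∑ k ∈ Finset.range m, p k - δ • ∑ k ∈ Finset.range m, p (k + 1) :=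
        sub_le_sub_left h2 _
    _ = δ • (p 0 - p m) := by
        rw [← smul_sub, ← Finset.sum_sub_distrib, Finset.sum_range_sub']
    _ ≤ δ • (1 : A) := by
        apply smul_le_smul_of_nonneg_left _ hδ.le
        exact (sub_le_self _ (hp m).proj.nonneg).trans (hp 0).proj.le_one
    _ = _ := (Algebra.algebraMap_eq_smul_one _).symm

/-- comparison of positive functionals on projections extends to positive elements -/
theorem functional_le [Nontrivial A] (hV : VNData ρ) (φ ψ : A →ₗ[ℝ] ℝ) (hφ : ∀ x, 0 ≤ x → 0 ≤ φ x)
    (hψ : ∀ x, 0 ≤ x → 0 ≤ ψ x) (e : A) (he : IsStarProjection e)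
    (h : ∀ g, IsStarProjection g → g * e = g → ψ g ≤ φ g) (x : A) (hx0 : 0 ≤ x)
    (hxe : x * e = x) : ψ x ≤ φ x := by
  have hφm : ∀ x y, x ≤ y → φ x ≤ φ y := fun x y hxy => by
    have := hφ _ (sub_nonneg.2 hxy); rw [map_sub] at this; linarith
  have hψm : ∀ x y, x ≤ y → ψ x ≤ ψ y := fun x y hxy => by
    have := hψ _ (sub_nonneg.2 hxy); rw [map_sub] at this; linarith
  have hx : IsSelfAdjoint x := IsSelfAdjoint.of_nonneg hx0
  have hsp : ∀ t ∈ spectrum ℝ x, 0 ≤ t := fun t ht => spectrum_nonneg_of_nonneg hx0 ht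
  have hes : star e = e := he.isSelfAdjoint
  have hex : (1 - e) * x = 0 := by
    have := congrArg star hxe
    rw [star_mul, hes, hx.star_eq] at this
    rw [sub_mul, this, one_mul, sub_self]
  have hφ1 : 0 ≤ φ 1 := hφ _ zero_le_one
  refine le_of_forall_pos_le_add fun ε hε => ?_
  set δ := ε / (φ 1 + 1) with hδdef
  have hδ : 0 < δ := by positivity
  obtain ⟨m, hm⟩ := exists_nat_gt (‖x‖ / δ)
  rw [div_lt_iff₀ hδ] at hm
  choose p hp using fun k : ℕ => hV.exists_cut x (0 + k * δ)
  obtain ⟨h1, h2⟩ := layer hx hδ hp m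
  rw [layer_eq hx m (fun t ht => ⟨hsp t ht, by
    have := spectrum.norm_le_norm_of_mem ht
    rw [Real.norm_eq_abs] at this
    have := le_abs_self t
    linarith⟩), map_zero, sub_zero] at h1 h2
  have hpe : ∀ k, ψ (p k) ≤ φ (p k) := fun k => by
    apply h _ (hp k).proj
    have := cut_zero_mul (hp k) hx hsp (by positivity) hex
    have := congrArg star this
    rw [star_mul, star_sub, star_one, hes, (hp k).sa, star_zero, mul_sub, mul_one,
      sub_eq_zero] at this
    exact this.symm
  have k1 := hψm _ _ h1
  have k2 := hφm _ _ h2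
  rw [map_smul, map_sum, smul_eq_mul] at k1 k2
  have k3 : ∑ k ∈ Finset.range m, ψ (p k) ≤ ∑ k ∈ Finset.range m, φ (p k) :=
    Finset.sum_le_sum fun k _ => hpe k
  have k4 : ∑ k ∈ Finset.range m, φ (p k) - ∑ k ∈ Finset.range m, φ (p (k+1)) ≤ φ 1 := by
    rw [← Finset.sum_sub_distrib, Finset.sum_range_sub' (fun k => φ (p k))]
    have := hφ _ (hp m).proj.nonneg
    have := hφm _ _ (hp 0).proj.le_one
    linarith
  have k5 : δ * (φ 1 + 1) = ε := by rw [hδdef]; field_simp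
  nlinarith

end abstractPart
end SOTU
namespace SOTU
section comparison
variable {A : Type*} [CStarAlgebra A]
variable {H : Type*} [NormedAddCommGroup H] [InnerProductSpace ℂ H] [CompleteSpace H]
variable {ρ : A →⋆ₐ[ℂ] (H →L[ℂ] H)}

theorem lim_left (hinj : Function.Injective ρ) {c : Set A} {w : A}
    (hw : ∀ ξ, ρ w ξ ∈ closure ((fun v => ρ v ξ) '' c)) {z : A} (hz : ∀ v ∈ c, z * v = 0) :
    z * w = 0 := by
  apply hinj
  rw [map_zero, map_mul]
  ext ξ
  have hcl : IsClosed {η : H | ρ z η = 0} :=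
    isClosed_eq (ρ z).continuous continuous_const
  have hsub : (fun v => ρ v ξ) '' c ⊆ {η : H | ρ z η = 0} := by
    rintro _ ⟨v, hv, rfl⟩
    show ρ z (ρ v ξ) = 0
    rw [← mul_apply_eq_comp, ← map_mul, hz v hv, map_zero]; rfl
  exact hcl.closure_subset_iff.2 hsub (hw ξ)

theorem lim_right (hinj : Function.Injective ρ) {c : Set A} {w : A}
    (hw : ∀ ξ, ρ w ξ ∈ closure ((fun v => ρ v ξ) '' c)) {z : A} (hz : ∀ v ∈ c, v * z = 0) :
    w * z = 0 := by
  apply hinj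
  rw [map_zero, map_mul]
  ext ξ
  have hcl : IsClosed ({0} : Set H) := isClosed_singleton
  have hsub : (fun v => ρ v (ρ z ξ)) '' c ⊆ {0} := by
    rintro _ ⟨v, hv, rfl⟩
    show ρ v (ρ z ξ) = 0
    rw [← mul_apply_eq_comp, ← map_mul, hz v hv, map_zero]; rfl
  exact hcl.closure_subset_iff.2 hsub (hw (ρ z ξ))

theorem lim_pi (hinj : Function.Injective ρ) {c : Set A} {w : A}
    (hw : ∀ ξ, ρ w ξ ∈ closure ((fun v => ρ v ξ) '' c)) (hc : ∀ v ∈ c, v * star v * v = v)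
    (hext : ∀ v ∈ c, Ext v w) : w * star w * w = w := by
  have : (w * star w - 1) * w = 0 := by
    apply lim_left hinj hw
    intro v hv
    obtain ⟨h1, h2⟩ := hext v hv
    have h3 : star w * v = star v * v := by
      have := congrArg star h2
      simpa using this
    rw [sub_mul, mul_assoc, h3, ← mul_assoc, h1, hc v hv, one_mul, sub_self]
  rw [sub_mul, one_mul, sub_eq_zero] at this
  exact this

theorem ext_trans {v w x : A} (hv : v * star v * v = v) (hw : w * star w * w = w)
    (h1 : Ext v w) (h2 : Ext w x) : Ext v x := by
  obtain ⟨a1, a2⟩ := h1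
  obtain ⟨b1, b2⟩ := h2
  have a1' : v * star w = v * star v := by simpa using congrArg star a1
  have a2' : star w * v = star v * v := by simpa using congrArg star a2
  have hv' : star v * v * star v = star v := by simpa [mul_assoc] using congrArg star hv
  have hw' : star w * w * star w = star w := by simpa [mul_assoc] using congrArg star hw
  -- star v = star w * w * star v
  have e1 : star w * w * star v = star v := by
    rw [mul_assoc, a1, ← mul_assoc, a2', hv']
  have e2 : star v * w * star w = star v := by
    rw [a2, mul_assoc, a1', ← mul_assoc, hv']
  constructor
  · rw [← e1, ← mul_assoc, ← mul_assoc, b1, hw, a1, e1]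
  · calc star v * x = star v * w * (star w * x) := by rw [← mul_assoc, e2]
      _ = star v * w := by rw [b2, ← mul_assoc, e2]
      _ = _ := a2

variable [PartialOrder A] [StarOrderedRing A]

/-- a nonzero `x` gives a nonzero partial isometry -/
theorem exists_pi (hV : VNData ρ) {x p q : A} (hx : x ≠ 0) (hp : IsStarProjection p)
    (hqx : q * x = x) (hxp : x * p = x) :
    ∃ v : A, v ≠ 0 ∧ v * star v * v = v ∧ q * v = v ∧ v * p = v := by
  have hps : star p = p := hp.isSelfAdjoint
  have : Nontrivial A := ⟨⟨x, 0, hx⟩⟩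
  set y := star x * x with hy
  have hysa : IsSelfAdjoint y := IsSelfAdjoint.star_mul_self x
  have hy0 : 0 ≤ y := star_mul_self_nonneg x
  have hyn : 0 < ‖y‖ := by
    rw [hy, CStarRing.norm_star_mul_self]
    have := norm_pos_iff.2 hx
    positivity
  have hsp : ∀ t ∈ spectrum ℝ y, 0 ≤ t := fun t ht => spectrum_nonneg_of_nonneg hy0 ht
  set δ := ‖y‖ / 2 with hδ
  have hδ0 : 0 < δ := by positivity
  obtain ⟨e, he⟩ := hV.exists_cut y δ
  have hmax : ∀ t : ℝ, 0 < max t δ := fun t => lt_of_lt_of_le hδ0 (le_max_right _ _)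
  have hhc : Continuous (fun t : ℝ => 1 / Real.sqrt (max t δ)) := by
    refine Continuous.div (by fun_prop) (by fun_prop) fun t => ?_
    exact (Real.sqrt_pos.2 (hmax t)).ne'
  set h := cfc (fun t : ℝ => 1 / Real.sqrt (max t δ)) y with hh
  have hhs : star h = h := (cfc_predicate _ _ : IsSelfAdjoint h)
  have he0 : e ≠ 0 := by
    rintro rfl
    have h1 := he.mulY
    rw [zero_mul] at h1
    have h2 : y ≤ algebraMap ℝ A δ := by
      have h3 : cfc (fun t : ℝ => t) y ≤ cfc (fun t : ℝ => max (t - δ) 0 + δ) y := by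
        refine cfc_mono (fun t _ => ?_) (by fun_prop) (by fun_prop)
        have := le_max_left (t - δ) 0
        linarith
      rw [cfc_id' ℝ y hysa, cfc_add y _ _ (by fun_prop) (by fun_prop), ← h1, zero_add,
        cfc_const δ y hysa] at h3
      exact h3
    have := (CStarAlgebra.norm_le_iff_le_algebraMap y hδ0.le hy0).2 h2
    rw [hδ] at this
    linarith
  have hhyh : h * y * h = cfc (fun t : ℝ => t / max t δ) y := by
    have e0 : h * y * h = h * cfc (fun t : ℝ => t) y * h := by rw [cfc_id' ℝ y hysa]
    rw [e0, hh, ← cfc_mul _ _ y hhc.continuousOn (by fun_prop),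
      ← cfc_mul (fun t : ℝ => 1 / Real.sqrt (max t δ) * t) _ y (hhc.mul continuous_id).continuousOn hhc.continuousOn]
    congr 1
    funext t
    have := Real.mul_self_sqrt (hmax t).le
    have h2 := (Real.sqrt_pos.2 (hmax t)).ne'
    have h3 := (hmax t).ne'
    rw [div_mul_eq_mul_div, one_mul, div_mul_div_comm, mul_one, this]
  have hdc : Continuous (fun t : ℝ => t / max t δ) := by
    refine Continuous.div (by fun_prop) (by fun_prop) fun t => (hmax t).ne'
  have hke : h * y * h * e = e := by
    have := he.kill_cfc (fun t => t / max t δ - 1) (by fun_prop) (by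
      intro t ht
      rw [max_eq_left ht.le, div_self (by linarith), sub_self])
    rw [cfc_sub _ _ y hdc.continuousOn (by fun_prop), cfc_const (1:ℝ) y hysa, map_one, sub_mul,
      one_mul, sub_eq_zero, ← hhyh] at this
    exact this
  have hvv : star (x * h * e) * (x * h * e) = e := by
    simp only [star_mul, hhs, he.sa]
    calc e * (h * star x) * (x * h * e) = e * (h * (star x * x) * h * e) := by
          simp only [mul_assoc]
      _ = e := by rw [← hy, hke, he.idem]
  have hep : e * p = e := by
    have h1 : (1 - p) * y = 0 := by
      have := congrArg star hxp
      rw [star_mul, hps] at this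
      rw [hy, ← mul_assoc, sub_mul, one_mul, this, sub_self, zero_mul]
    have := cut_zero_mul he hysa hsp hδ0.le h1
    have := congrArg star this
    rw [star_mul, star_sub, star_one, hps, he.sa, star_zero, mul_sub, mul_one,
      sub_eq_zero] at this
    exact this.symm
  refine ⟨x * h * e, ?_, ?_, ?_, ?_⟩
  · intro h0
    rw [h0, mul_zero] at hvv
    exact he0 hvv.symm
  · rw [mul_assoc, hvv, mul_assoc, he.idem]
  · rw [← mul_assoc, ← mul_assoc, hqx]
  · rw [mul_assoc, hep]

theorem comparison (hV : VNData ρ) (hinj : Function.Injective ρ) {p q : A}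
    (hp : IsStarProjection p) (hq : IsStarProjection q) :
    (∃ v, star v * v = p ∧ q * v = v) ∨ (∃ v, v * star v = q ∧ v * p = v) := by
  have hps : star p = p := hp.isSelfAdjoint
  have hqs : star q = q := hq.isSelfAdjoint
  have hpp : p * p = p := hp.isIdempotentElem
  have hqq : q * q = q := hq.isIdempotentElem
  let S := {v : A // v * star v * v = v ∧ q * v = v ∧ v * p = v}
  obtain ⟨⟨v, hv, hqv, hvp⟩, hmax⟩ := exists_maximal_of_chains_bounded
    (r := fun a b : S => Ext a.1 b.1) (by
      intro c hc
      rcases c.eq_empty_or_nonempty with rfl | hne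
      · exact ⟨⟨0, by simp⟩, by simp⟩
      · obtain ⟨w, hw1, hw2⟩ := hV.chain (Subtype.val '' c) (hne.image _) (by
            rintro _ ⟨a, ha, rfl⟩ _ ⟨b, hb, rfl⟩ hab
            exact hc ha hb (fun h => hab (by rw [h]))) (by
            rintro _ ⟨a, ha, rfl⟩; exact a.2.1)
        have k1 : w * star w * w = w := lim_pi hinj hw2 (by
            rintro _ ⟨a, ha, rfl⟩; exact a.2.1) hw1
        have k2 : (q - 1) * w = 0 := lim_left hinj hw2 (by
            rintro _ ⟨a, ha, rfl⟩
            rw [sub_mul, a.2.2.1, one_mul, sub_self])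
        have k3 : w * (p - 1) = 0 := lim_right hinj hw2 (by
            rintro _ ⟨a, ha, rfl⟩
            rw [mul_sub, a.2.2.2, mul_one, sub_self])
        rw [sub_mul, one_mul, sub_eq_zero] at k2
        rw [mul_sub, mul_one, sub_eq_zero] at k3
        exact ⟨⟨w, k1, k2, k3⟩, fun a ha => hw1 _ ⟨a, ha, rfl⟩⟩)
    (fun {a b c} h1 h2 => ext_trans a.2.1 b.2.1 h1 h2)
  have hv' : star v * v * star v = star v := by simpa [mul_assoc] using congrArg star hv
  have hpv : p * star v = star v := by simpa [hps] using congrArg star hvp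
  have hvq : star v * q = star v := by simpa [hqs] using congrArg star hqv
  have hp0 : IsStarProjection (p - star v * v) := by
    refine ⟨?_, ?_⟩
    · show (p - star v * v) * (p - star v * v) = p - star v * v
      have e1 : p * (star v * v) = star v * v := by rw [← mul_assoc, hpv]
      have e2 : star v * v * p = star v * v := by rw [mul_assoc, hvp]
      have e3 : star v * v * (star v * v) = star v * v := by rw [← mul_assoc, hv']
      rw [sub_mul, mul_sub, mul_sub, e1, e2, e3, hpp]; abel
    · show star (p - star v * v) = p - star v * v
      simp [hps]
  have hq0 : IsStarProjection (q - v * star v) := by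
    refine ⟨?_, ?_⟩
    · show (q - v * star v) * (q - v * star v) = q - v * star v
      have e1 : q * (v * star v) = v * star v := by rw [← mul_assoc, hqv]
      have e2 : v * star v * q = v * star v := by rw [mul_assoc, hvq]
      have e3 : v * star v * (v * star v) = v * star v := by rw [← mul_assoc, hv]
      rw [sub_mul, mul_sub, mul_sub, e1, e2, e3, hqq]; abel
    · show star (q - v * star v) = q - v * star v
      simp [hqs]
  have key : ∀ x, (q - v * star v) * x * (p - star v * v) = 0 := by
    intro x
    by_contra hne
    obtain ⟨w, hw0, hw1, hw2, hw3⟩ := exists_pi hV hne hp0 (q := q - v * star v) (by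
        rw [← mul_assoc, ← mul_assoc, hq0.isIdempotentElem.eq]) (by
        rw [mul_assoc _ _ (p - star v * v), hp0.isIdempotentElem.eq])
    have z1 : star v * w = 0 := by
      rw [← hw2, ← mul_assoc, mul_sub, hvq, ← mul_assoc, hv', sub_self, zero_mul]
    have z1' : star w * v = 0 := by simpa using congrArg star z1
    have z2 : w * star v = 0 := by
      rw [← hw3, mul_assoc, sub_mul, hpv, hv', sub_self, mul_zero]
    have z2' : v * star w = 0 := by simpa using congrArg star z2
    have qw : q * w = w := by
      rw [← hw2, ← mul_assoc, mul_sub, hqq, ← mul_assoc, hqv]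
    have wp : w * p = w := by
      rw [← hw3, mul_assoc, sub_mul, hpp, mul_assoc (star v), hvp]
    have hS : (v + w) * star (v + w) * (v + w) = v + w ∧ q * (v + w) = v + w ∧
        (v + w) * p = v + w := by
      refine ⟨?_, by rw [mul_add, hqv, qw], by rw [add_mul, hvp, wp]⟩
      have e1 : (v + w) * star (v + w) = v * star v + w * star w := by
        rw [star_add, add_mul, mul_add, mul_add, z2, z2', add_zero, zero_add]
      rw [e1, add_mul, mul_add, mul_add, hv, hw1, mul_assoc v, mul_assoc w, z1, z1', mul_zero,
        mul_zero, add_zero, zero_add]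
    have := hmax ⟨v + w, hS⟩ ⟨by rw [add_mul, z2, add_zero], by rw [mul_add, z1, add_zero]⟩
    have h2 : star (v + w) * v = star (v + w) * (v + w) := this.2
    rw [mul_add, left_eq_add, star_add, add_mul, z1, zero_add] at h2
    exact hw0 ((CStarRing.star_mul_self_eq_zero_iff w).1 h2)
  rcases hV.fac _ _ hp0 hq0 key with h | h
  · left
    exact ⟨v, (sub_eq_zero.1 h).symm, hqv⟩
  · right
    exact ⟨v, (sub_eq_zero.1 h).symm, hvp⟩

end comparison
end SOTU
namespace SOTU
section trace
variable {A : Type*} [CStarAlgebra A]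
variable {H : Type*} [NormedAddCommGroup H] [InnerProductSpace ℂ H] [CompleteSpace H]
variable {ρ : A →⋆ₐ[ℂ] (H →L[ℂ] H)}

/-- faithful tracial state -/
structure IsTr (τ : A →ₗ[ℂ] ℂ) : Prop where
  one : τ 1 = 1
  tr : ∀ x y, τ (x * y) = τ (y * x)
  pos : ∀ x, 0 ≤ τ (star x * x)
  faith : ∀ x, τ (star x * x) = 0 → x = 0

/-- squared 2-norm -/
noncomputable def T (τ : A →ₗ[ℂ] ℂ) (y : A) : ℝ := (τ (star y * y)).re

/-- real part of the trace -/
noncomputable def reT (τ : A →ₗ[ℂ] ℂ) : A →ₗ[ℝ] ℝ where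
  toFun x := (τ x).re
  map_add' x y := by simp
  map_smul' c x := by
    have : τ (c • x) = (c : ℂ) * τ x := by
      rw [← smul_eq_mul, ← map_smul]; simp
    simp [this]

/-- real vector functional -/
noncomputable def vecF (ρ : A →⋆ₐ[ℂ] (H →L[ℂ] H)) (ξ : H) : A →ₗ[ℝ] ℝ where
  toFun x := (inner ℂ ξ (ρ x ξ)).re
  map_add' x y := by simp
  map_smul' c x := by
    have : ρ (c • x) = (c : ℂ) • ρ x := by
      rw [← map_smul]; simp
    simp [this]

theorem vecF_star_mul (ξ : H) (y : A) : vecF ρ ξ (star y * y) = ‖ρ y ξ‖ ^ 2 := by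
  show (inner ℂ ξ (ρ (star y * y) ξ)).re = _
  rw [map_mul, map_star, mul_apply_eq_comp, ContinuousLinearMap.star_eq_adjoint,
    ContinuousLinearMap.adjoint_inner_right, inner_self_eq_norm_sq_to_K]
  norm_cast

theorem vecF_proj (ξ : H) {p : A} (hp : IsStarProjection p) : vecF ρ ξ p = ‖ρ p ξ‖ ^ 2 := by
  rw [← vecF_star_mul, hp.isSelfAdjoint.star_eq, hp.isIdempotentElem.eq]

variable {τ : A →ₗ[ℂ] ℂ}

theorem IsTr.T_nonneg (h : IsTr τ) (y : A) : 0 ≤ T τ y := (Complex.nonneg_iff.1 (h.pos y)).1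

theorem IsTr.coe_T (h : IsTr τ) (y : A) : τ (star y * y) = (T τ y : ℂ) := by
  apply Complex.ext
  · rfl
  · simpa using (Complex.nonneg_iff.1 (h.pos y)).2.symm

theorem IsTr.T_eq_zero (h : IsTr τ) {y : A} (hy : T τ y = 0) : y = 0 := by
  apply h.faith
  rw [h.coe_T, hy]; simp

theorem IsTr.proj_eq_zero (h : IsTr τ) {p : A} (hp : IsStarProjection p) (h0 : reT τ p ≤ 0) :
    p = 0 := by
  apply h.T_eq_zero
  apply le_antisymm _ (h.T_nonneg p)
  unfold T
  rw [hp.isSelfAdjoint.star_eq, hp.isIdempotentElem.eq]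
  exact h0

theorem proj_sub {p q : A} (hp : IsStarProjection p) (hq : IsStarProjection q) (h : p * q = q) :
    IsStarProjection (p - q) := by
  have hps : star p = p := hp.isSelfAdjoint
  have hqs : star q = q := hq.isSelfAdjoint
  have h' : q * p = q := by simpa [hps, hqs] using congrArg star h
  refine ⟨?_, ?_⟩
  · show (p - q) * (p - q) = p - q
    rw [sub_mul, mul_sub, mul_sub, h, h', hp.isIdempotentElem.eq, hq.isIdempotentElem.eq]; abel
  · show star (p - q) = p - q
    rw [star_sub, hps, hqs]

theorem proj_of_pi {v p : A} (h : star v * v = p) (hp : IsStarProjection p) :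
    v * p = v := by
  have hps : star p = p := hp.isSelfAdjoint
  have hpp : p * p = p := hp.isIdempotentElem
  have : star (v * p - v) * (v * p - v) = 0 := by
    rw [star_sub, star_mul, hps, sub_mul, mul_sub, mul_sub]
    have e1 : p * star v * (v * p) = p := by
      rw [mul_assoc, ← mul_assoc (star v), h, hpp, hpp]
    have e2 : p * star v * v = p := by rw [mul_assoc, h, hpp]
    have e3 : star v * (v * p) = p := by rw [← mul_assoc, h, hpp]
    rw [e1, e2, e3, h]; abel
  exact sub_eq_zero.1 ((CStarRing.star_mul_self_eq_zero_iff _).1 this)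

theorem proj_mul_star {v p : A} (h : star v * v = p) (hp : IsStarProjection p) :
    IsStarProjection (v * star v) := by
  refine ⟨?_, ?_⟩
  · show v * star v * (v * star v) = v * star v
    rw [mul_assoc, ← mul_assoc (star v), h, ← mul_assoc, proj_of_pi h hp]
  · show star (v * star v) = v * star v
    simp

variable [PartialOrder A] [StarOrderedRing A]

theorem IsTr.reT_nonneg (h : IsTr τ) {x : A} (hx : 0 ≤ x) : 0 ≤ reT τ x := by
  obtain ⟨y, rfl⟩ := CStarAlgebra.nonneg_iff_eq_star_mul_self.1 hx
  exact h.T_nonneg y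

theorem vecF_nonneg (ξ : H) {x : A} (hx : 0 ≤ x) : 0 ≤ vecF ρ ξ x := by
  obtain ⟨y, rfl⟩ := CStarAlgebra.nonneg_iff_eq_star_mul_self.1 hx
  rw [vecF_star_mul]; positivity

theorem equiv_of_trace_eq (hV : VNData ρ) (hinj : Function.Injective ρ) (hτ : IsTr τ) {p q : A}
    (hp : IsStarProjection p) (hq : IsStarProjection q) (h : τ p = τ q) :
    ∃ v, star v * v = p ∧ v * star v = q := by
  have hps : star p = p := hp.isSelfAdjoint
  rcases comparison hV hinj hp hq with ⟨v, h1, h2⟩ | ⟨v, h1, h2⟩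
  · refine ⟨v, h1, ?_⟩
    have hr := proj_mul_star h1 hp
    have hs := proj_sub hq hr (by rw [← mul_assoc, h2])
    have := hτ.proj_eq_zero hs (by
      show (τ (q - v * star v)).re ≤ 0
      rw [map_sub, hτ.tr, h1, h, sub_self]; simp)
    exact (sub_eq_zero.1 this).symm
  · refine ⟨v, ?_, h1⟩
    have h1' : star (star v) * star v = q := by rw [star_star, h1]
    have hr := proj_mul_star h1' hq
    rw [star_star] at hr
    have h2' : p * star v = star v := by simpa [hps] using congrArg star h2
    have hs := proj_sub hp hr (by rw [← mul_assoc, h2'])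
    have := hτ.proj_eq_zero hs (by
      show (τ (p - star v * v)).re ≤ 0
      rw [map_sub, hτ.tr, h1, h, sub_self]; simp)
    exact (sub_eq_zero.1 this).symm

theorem exists_dom [Nontrivial A] (hV : VNData ρ) (hinj : Function.Injective ρ) (hτ : IsTr τ) :
    ∃ (e : A) (ξ : H), IsStarProjection e ∧ e ≠ 0 ∧
      ∀ y, y * e = y → T τ y ≤ 2 * ‖ρ y ξ‖ ^ 2 := by
  have hH : ∃ ξ : H, ‖ξ‖ = 1 := by
    have : (ρ (1 : A)) ≠ ρ 0 := fun h => one_ne_zero (hinj h)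
    rw [map_one, map_zero] at this
    have : ∃ ξ : H, ξ ≠ 0 := by
      by_contra hcon
      push Not at hcon
      apply this
      ext ξ
      rw [hcon ξ]; simp
    obtain ⟨ξ, hξ⟩ := this
    exact ⟨((‖ξ‖ : ℂ)⁻¹) • ξ, by
      rw [norm_smul]; simp [norm_ne_zero_iff.2 hξ]⟩
  obtain ⟨ξ, hξ⟩ := hH
  let S := {f : A // IsStarProjection f ∧ ‖ρ f ξ‖ ^ 2 ≤ (1/2) * reT τ f}
  obtain ⟨⟨f, hf, hfS⟩, hmax⟩ := exists_maximal_of_chains_bounded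
    (r := fun a b : S => Ext a.1 b.1) (by
      intro c hc
      rcases c.eq_empty_or_nonempty with rfl | hne
      · exact ⟨⟨0, by constructor <;> simp [IsIdempotentElem], by simp⟩, by simp⟩
      · have hpi : ∀ v ∈ Subtype.val '' c, v * star v * v = v := by
            rintro _ ⟨a, ha, rfl⟩
            rw [a.2.1.isSelfAdjoint.star_eq, a.2.1.isIdempotentElem.eq, a.2.1.isIdempotentElem.eq]
        obtain ⟨w, hw1, hw2⟩ := hV.chain (Subtype.val '' c) (hne.image _) (by
            rintro _ ⟨a, ha, rfl⟩ _ ⟨b, hb, rfl⟩ hab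
            exact hc ha hb (fun h => hab (by rw [h]))) hpi
        have hwv : ∀ a ∈ c, w * a.1 = a.1 ∧ a.1 * w = a.1 := by
          intro a ha
          obtain ⟨k1, k2⟩ := hw1 a.1 ⟨a, ha, rfl⟩
          rw [a.2.1.isSelfAdjoint.star_eq, a.2.1.isIdempotentElem.eq] at k1 k2
          exact ⟨k1, k2⟩
        have k1 : (star w - 1) * w = 0 := lim_left hinj hw2 (by
            rintro _ ⟨a, ha, rfl⟩
            have := congrArg star (hwv a ha).2
            rw [star_mul, a.2.1.isSelfAdjoint.star_eq] at this
            rw [sub_mul, this, one_mul, sub_self])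
        rw [sub_mul, one_mul, sub_eq_zero] at k1
        have hws : star w = w := by
          have := congrArg star k1
          rw [star_mul, star_star, k1] at this
          exact this.symm
        have hw : IsStarProjection w := ⟨by
          show w * w = w
          rw [hws] at k1; exact k1, hws⟩
        have hnorm : ‖ρ w ξ‖ ^ 2 ≤ (1/2) * reT τ w := by
          have hcl : IsClosed {η : H | ‖η‖ ^ 2 ≤ (1/2) * reT τ w} :=
            isClosed_le (by fun_prop) continuous_const
          refine hcl.closure_subset_iff.2 ?_ (hw2 ξ)
          rintro _ ⟨_, ⟨a, ha, rfl⟩, rfl⟩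
          show ‖ρ a.1 ξ‖ ^ 2 ≤ _
          refine a.2.2.trans ?_
          have := hτ.reT_nonneg (proj_sub hw a.2.1 (hwv a ha).1).nonneg
          rw [map_sub] at this
          linarith
        exact ⟨⟨w, hw, hnorm⟩, fun a ha => hw1 _ ⟨a, ha, rfl⟩⟩)
    (fun {a b c} h1 h2 => by
      refine ext_trans ?_ ?_ h1 h2
      · rw [a.2.1.isSelfAdjoint.star_eq, a.2.1.isIdempotentElem.eq, a.2.1.isIdempotentElem.eq]
      · rw [b.2.1.isSelfAdjoint.star_eq, b.2.1.isIdempotentElem.eq, b.2.1.isIdempotentElem.eq])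
  have hfs : star f = f := hf.isSelfAdjoint
  have hff : f * f = f := hf.isIdempotentElem
  have he : IsStarProjection (1 - f) := proj_sub (by constructor <;> simp [IsIdempotentElem]) hf (by simp)
  refine ⟨1 - f, ξ, he, ?_, ?_⟩
  · intro h0
    have : f = 1 := (sub_eq_zero.1 h0).symm
    rw [this, map_one] at hfS
    have h1 : reT τ 1 = 1 := by show (τ 1).re = 1; rw [hτ.one]; simp
    rw [h1] at hfS
    simp [hξ] at hfS
    norm_num at hfS
  · intro y hy
    have := functional_le hV ((2:ℝ) • vecF ρ ξ) (reT τ) (fun x hx => by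
      have := vecF_nonneg (ρ := ρ) ξ hx
      simp only [LinearMap.smul_apply, smul_eq_mul]; positivity) (fun x hx => hτ.reT_nonneg hx)
      (1 - f) he (by
        intro g hg hge
        by_contra hcon
        push Not at hcon
        rw [LinearMap.smul_apply, smul_eq_mul, vecF_proj ξ hg] at hcon
        have hgs : star g = g := hg.isSelfAdjoint
        have hgf : g * f = 0 := by simpa [mul_sub] using hge
        have hfg : f * g = 0 := by simpa [hgs, hfs] using congrArg star hgf
        have hsum : IsStarProjection (f + g) := by
          refine ⟨?_, ?_⟩
          · show (f + g) * (f + g) = f + g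
            rw [add_mul, mul_add, mul_add, hgf, hfg, hff, hg.isIdempotentElem.eq]; simp
          · show star (f + g) = f + g
            rw [star_add, hfs, hgs]
        have hn : ‖ρ (f + g) ξ‖ ^ 2 ≤ (1/2) * reT τ (f + g) := by
          rw [← vecF_proj ξ hsum, map_add, vecF_proj ξ hf, vecF_proj ξ hg, map_add]
          linarith
        have := hmax ⟨f + g, hsum, hn⟩ ⟨by
            show (f + g) * star f = f * star f
            rw [hfs, add_mul, hgf, add_zero], by
            show star f * (f + g) = star f * f
            rw [hfs, mul_add, hfg, add_zero]⟩
        have h2 : star (f + g) * f = star (f + g) * (f + g) := this.2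
        rw [star_add, hfs, hgs, hsum.isIdempotentElem.eq, add_mul, hff, hgf, add_zero,
          left_eq_add] at h2
        rw [h2] at hcon
        simp at hcon)
      (star y * y) (star_mul_self_nonneg y) (by rw [mul_assoc, hy])
    rw [LinearMap.smul_apply, smul_eq_mul, vecF_star_mul] at this
    exact this

theorem cover (hV : VNData ρ) (hinj : Function.Injective ρ) (hτ : IsTr τ) {e : A}
    (he : IsStarProjection e) (k : ℕ) : ∀ f : A, IsStarProjection f → reT τ f ≤ k * reT τ e →
    ∃ l : List A, (l.map fun v => star v * v).sum = f ∧ ∀ v ∈ l, e * v = v := by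
  induction k with
  | zero =>
    intro f hf h
    refine ⟨[], ?_, by simp⟩
    simp only [Nat.cast_zero, zero_mul] at h
    simpa using (hτ.proj_eq_zero hf h).symm
  | succ k ih =>
    intro f hf h
    have hfs : star f = f := hf.isSelfAdjoint
    rcases comparison hV hinj hf he with ⟨v, h1, h2⟩ | ⟨v, h1, h2⟩
    · exact ⟨[v], by simpa using h1, by simpa using h2⟩
    · have h1' : star (star v) * star v = e := by rw [star_star, h1]
      have hr := proj_mul_star h1' he
      rw [star_star] at hr
      have h2' : f * star v = star v := by simpa [hfs] using congrArg star h2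
      have hs := proj_sub hf hr (by rw [← mul_assoc, h2'])
      obtain ⟨l, hl1, hl2⟩ := ih _ hs (by
        rw [map_sub]
        have : reT τ (star v * v) = reT τ e := by
          show (τ (star v * v)).re = _
          rw [hτ.tr, h1]; rfl
        rw [this]
        push_cast at h
        linarith)
      refine ⟨v :: l, by simp [hl1], ?_⟩
      intro w hw
      rcases List.mem_cons.1 hw with rfl | hw
      · have := proj_of_pi h1' he
        simpa [he.isSelfAdjoint.star_eq] using congrArg star this
      · exact hl2 w hw

theorem exists_vectors [Nontrivial A] (hV : VNData ρ) (hinj : Function.Injective ρ)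
    (hτ : IsTr τ) :
    ∃ (s : ℕ) (η : Fin s → H), ∀ y, T τ y ≤ 2 * ∑ j, ‖ρ y (η j)‖ ^ 2 := by
  obtain ⟨e, ξ, he, he0, hd⟩ := exists_dom hV hinj hτ
  have hpos : 0 < reT τ e := by
    by_contra h
    exact he0 (hτ.proj_eq_zero he (not_lt.1 h))
  obtain ⟨k, hk⟩ := exists_nat_gt (1 / reT τ e)
  rw [div_lt_iff₀ hpos] at hk
  obtain ⟨l, hl1, hl2⟩ := cover hV hinj hτ he k 1 (by constructor <;> simp [IsIdempotentElem])
    (by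
      have h1 : reT τ 1 = 1 := by show (τ 1).re = 1; rw [hτ.one]; simp
      rw [h1]; exact hk.le)
  refine ⟨l.length, fun j => ρ (star (l.get j)) ξ, fun y => ?_⟩
  have hes : star e = e := he.isSelfAdjoint
  have h1 : T τ y = ∑ j : Fin l.length, T τ (y * star (l.get j)) := by
    have : star y * y = ∑ j : Fin l.length, star y * y * (star (l.get j) * l.get j) := by
      rw [← Finset.mul_sum]
      have : ∑ j : Fin l.length, star (l.get j) * l.get j = 1 := by
        rw [← hl1, ← List.sum_ofFn]
        congr 1
        apply List.ext_getElem <;> simp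
      rw [this, mul_one]
    unfold T
    rw [this, map_sum, Complex.re_sum]
    refine Finset.sum_congr rfl fun j _ => ?_
    rw [← mul_assoc, hτ.tr]
    simp [mul_assoc]
  rw [h1, Finset.mul_sum]
  refine Finset.sum_le_sum fun j _ => ?_
  have := hd (y * star (l.get j)) (by
    have h3 := congrArg star (hl2 (l.get j) (List.get_mem _ _))
    rw [star_mul, hes] at h3
    rw [mul_assoc, h3])
  rwa [map_mul, mul_apply_eq_comp] at this

end trace
end SOTU
namespace SOTU
section twonorm
open Filter Topology
variable {A : Type*} [CStarAlgebra A]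
variable {H : Type*} [NormedAddCommGroup H] [InnerProductSpace ℂ H] [CompleteSpace H]
variable {ρ : A →⋆ₐ[ℂ] (H →L[ℂ] H)} {τ : A →ₗ[ℂ] ℂ}

theorem IsTr.T_add_le (h : IsTr τ) (x y : A) : T τ (x + y) ≤ 2 * T τ x + 2 * T τ y := by
  have h1 := h.T_nonneg (x - y)
  have h2 : T τ (x + y) + T τ (x - y) = 2 * T τ x + 2 * T τ y := by
    unfold T
    simp only [star_add, star_sub, add_mul, mul_add, sub_mul, mul_sub, map_add, map_sub,
      Complex.add_re, Complex.sub_re]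
    ring
  linarith

theorem T_neg (x : A) : T τ (-x) = T τ x := by
  unfold T; simp

theorem T_sub_comm (x y : A) : T τ (x - y) = T τ (y - x) := by
  rw [← neg_sub, T_neg]

theorem IsTr.T_star (h : IsTr τ) (x : A) : T τ (star x) = T τ x := by
  unfold T; rw [h.tr, star_star]

theorem IsTr.T_conj (h : IsTr τ) {u : A} (hu : u * star u = 1) (y : A) :
    T τ (star u * y * u) = T τ y := by
  unfold T
  have : star (star u * y * u) * (star u * y * u) = star u * (star y * y * u) := by
    simp only [star_mul, star_star]
    calc star u * (star y * u) * (star u * y * u) = star u * (star y * (u * star u) * y * u) := by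
          simp only [mul_assoc]
      _ = _ := by rw [hu, mul_one]
  rw [this, h.tr, mul_assoc, hu, mul_one]

theorem IsTr.norm_sq_le (h : IsTr τ) (x : A) : ‖τ x‖ ^ 2 ≤ T τ x := by
  have h1 := h.T_nonneg (x - (τ x) • (1 : A))
  have h2 : T τ (x - (τ x) • (1 : A)) = T τ x - ‖τ x‖ ^ 2 := by
    have hst : τ (star x) = star (τ x) := by
      have p1 := h.pos (1 + x)
      have p2 := h.pos (1 + Complex.I • x)
      have p3 := h.pos x
      have p4 := h.pos (1 : A)
      simp only [star_add, star_one, add_mul, mul_add, one_mul, mul_one, map_add, star_smul,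
        smul_mul_assoc, mul_smul_comm, map_smul, smul_eq_mul, Complex.nonneg_iff] at p1 p2 p3 p4
      obtain ⟨_, q1⟩ := p1
      obtain ⟨_, q2⟩ := p2
      obtain ⟨_, q3⟩ := p3
      obtain ⟨_, q4⟩ := p4
      simp at q1 q2 q3 q4
      apply Complex.ext
      · simp; linarith
      · simp; linarith
    rw [← Complex.normSq_eq_norm_sq]
    unfold T
    simp only [star_sub, star_smul, star_one, sub_mul, mul_sub, one_mul, mul_one, map_sub,
        smul_mul_assoc, mul_smul_comm, map_smul, smul_eq_mul, hst, h.one]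
    simp [Complex.normSq_apply]
  linarith

/-- approximate conjugacy in 2-norm along `u` -/
def Rel (τ : A →ₗ[ℂ] ℂ) (u : ℕ → A) (x y : A) : Prop :=
  Tendsto (fun m => T τ (star (u m) * y * u m - x)) atTop (𝓝 0)

theorem Rel.trace_eq (h : IsTr τ) {u : ℕ → A} (hu : ∀ m, u m * star (u m) = 1) {x y : A}
    (hr : Rel τ u x y) : τ x = τ y := by
  have h1 : ∀ m, ‖τ y - τ x‖ ^ 2 ≤ T τ (star (u m) * y * u m - x) := by
    intro m
    refine le_trans (le_of_eq ?_) (h.norm_sq_le _)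
    rw [map_sub, mul_assoc, h.tr, mul_assoc, hu, mul_one]
  have h2 : ‖τ y - τ x‖ ^ 2 ≤ 0 := ge_of_tendsto' hr h1
  have h3 : ‖τ y - τ x‖ = 0 := by nlinarith [norm_nonneg (τ y - τ x)]
  exact (sub_eq_zero.1 (norm_eq_zero.1 h3)).symm

theorem Rel.add (h : IsTr τ) {u : ℕ → A} {x y x' y' : A}
    (hr : Rel τ u x y) (hr' : Rel τ u x' y') : Rel τ u (x + x') (y + y') := by
  have h0 : Tendsto (fun m => 2 * T τ (star (u m) * y * u m - x)
      + 2 * T τ (star (u m) * y' * u m - x')) atTop (𝓝 0) := by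
    simpa using (hr.const_mul 2).add (hr'.const_mul 2)
  refine squeeze_zero (fun m => h.T_nonneg _) (fun m => ?_) h0
  refine le_trans (le_of_eq ?_) (h.T_add_le _ _)
  congr 1
  rw [mul_add, add_mul]; abel

theorem Rel.const {u : ℕ → A} (hu : ∀ m, star (u m) * u m = 1) (c : ℝ) :
    Rel τ u (algebraMap ℝ A c) (algebraMap ℝ A c) := by
  have : ∀ m, T τ (star (u m) * algebraMap ℝ A c * u m - algebraMap ℝ A c) = 0 := by
    intro m
    rw [Algebra.algebraMap_eq_smul_one, mul_smul_comm, mul_one, smul_mul_assoc, hu, sub_self]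
    simp [T]
  unfold Rel
  simp only [this]
  exact tendsto_const_nhds

theorem Rel.limit (h : IsTr τ) {u : ℕ → A} (hu : ∀ m, u m * star (u m) = 1) {x y : A}
    (hl : ∀ ε : ℝ, 0 < ε → ∃ x' y', Rel τ u x' y' ∧ T τ (x - x') < ε ∧ T τ (y - y') < ε) :
    Rel τ u x y := by
  refine Metric.tendsto_atTop.2 fun ε hε => ?_
  obtain ⟨x', y', hr, h1, h2⟩ := hl (ε / 20) (by positivity)
  obtain ⟨N, hN⟩ := Metric.tendsto_atTop.1 hr (ε / 20) (by positivity)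
  refine ⟨N, fun m hm => ?_⟩
  have h3 := hN m hm
  rw [Real.dist_eq, sub_zero, abs_of_nonneg (h.T_nonneg _)] at h3 ⊢
  have e1 : star (u m) * y * u m - x = (star (u m) * (y - y') * u m) +
      ((star (u m) * y' * u m - x') + (x' - x)) := by
    rw [mul_sub, sub_mul]; abel
  rw [e1]
  have k1 := h.T_add_le (star (u m) * (y - y') * u m) ((star (u m) * y' * u m - x') + (x' - x))
  have k2 := h.T_add_le (star (u m) * y' * u m - x') (x' - x)
  rw [h.T_conj (hu m)] at k1
  rw [T_sub_comm x' x] at k2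
  linarith

variable [PartialOrder A] [StarOrderedRing A]

theorem IsTr.T_mul_left (h : IsTr τ) (x y : A) : T τ (x * y) ≤ ‖x‖ ^ 2 * T τ y := by
  have h1 : star x * x ≤ algebraMap ℝ A (‖x‖ ^ 2) := by
    rw [← CStarAlgebra.norm_le_iff_le_algebraMap _ (by positivity) (star_mul_self_nonneg x),
      CStarRing.norm_star_mul_self, sq]
  have h2 := h.reT_nonneg (star_left_conjugate_nonneg (sub_nonneg.2 h1) y)
  rw [mul_sub, sub_mul, map_sub, Algebra.algebraMap_eq_smul_one, mul_smul_comm, smul_mul_assoc,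
    mul_one, map_smul] at h2
  have e1 : T τ (x * y) = reT τ (star y * (star x * x) * y) := by
    show (τ (star (x * y) * (x * y))).re = (τ _).re
    simp only [star_mul, mul_assoc]
  have e2 : T τ y = reT τ (star y * y) := rfl
  rw [e1, e2]
  rw [smul_eq_mul] at h2
  linarith

theorem IsTr.T_mul_right (h : IsTr τ) (x y : A) : T τ (y * x) ≤ ‖x‖ ^ 2 * T τ y := by
  have := h.T_mul_left (star x) (star y)
  rwa [← star_mul, h.T_star, h.T_star, norm_star] at this

theorem IsTr.T_le_norm (h : IsTr τ) (x : A) : T τ x ≤ ‖x‖ ^ 2 := by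
  have := h.T_mul_left x 1
  have h1 : T τ 1 = 1 := by unfold T; simp [h.one]
  rwa [mul_one, h1, mul_one] at this

theorem Rel.mul [Nontrivial A] (h : IsTr τ) {u : ℕ → A} (hu : ∀ m, u m * star (u m) = 1)
    {x y x' y' : A}
    (hr : Rel τ u x y) (hr' : Rel τ u x' y') : Rel τ u (x * x') (y * y') := by
  have hn : ∀ m, ‖u m‖ = 1 := fun m => by
    have h1 : ‖u m‖ * ‖u m‖ = 1 := by rw [← CStarRing.norm_self_mul_star, hu, norm_one]
    nlinarith [norm_nonneg (u m)]
  have h0 : Tendsto (fun m => 2 * (‖y‖ ^ 2 * T τ (star (u m) * y' * u m - x'))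
      + 2 * (‖x'‖ ^ 2 * T τ (star (u m) * y * u m - x))) atTop (𝓝 0) := by
    simpa using ((hr'.const_mul (‖y‖ ^ 2)).const_mul 2).add ((hr.const_mul (‖x'‖ ^ 2)).const_mul 2)
  refine squeeze_zero (fun m => h.T_nonneg _) (fun m => ?_) h0
  have e1 : star (u m) * (y * y') * u m - x * x' =
      (star (u m) * y * u m) * (star (u m) * y' * u m - x') +
      (star (u m) * y * u m - x) * x' := by
    have : star (u m) * (y * y') * u m = star (u m) * y * u m * (star (u m) * y' * u m) := by
      calc _ = star (u m) * y * (u m * star (u m)) * y' * u m := by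
            rw [hu, mul_one]; simp only [mul_assoc]
        _ = _ := by simp only [mul_assoc]
    rw [this, mul_sub, sub_mul]; abel
  rw [e1]
  refine (h.T_add_le _ _).trans (add_le_add ?_ ?_)
  · refine mul_le_mul_of_nonneg_left ?_ (by norm_num)
    refine (h.T_mul_left _ _).trans (mul_le_mul_of_nonneg_right ?_ (h.T_nonneg _))
    have : ‖star (u m) * y * u m‖ ≤ ‖y‖ := by
      refine (norm_mul_le _ _).trans ?_
      rw [hn, mul_one]
      refine (norm_mul_le _ _).trans ?_
      rw [norm_star, hn, one_mul]
    gcongr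
  · exact mul_le_mul_of_nonneg_left (h.T_mul_right _ _) (by norm_num)

theorem Rel.poly [Nontrivial A] (h : IsTr τ) {u : ℕ → A} (hu : ∀ m, u m * star (u m) = 1)
    (hu' : ∀ m, star (u m) * u m = 1) {x y : A} (hr : Rel τ u x y) (P : Polynomial ℝ) :
    Rel τ u (Polynomial.aeval x P) (Polynomial.aeval y P) := by
  induction P using Polynomial.induction_on with
  | C c => simpa using Rel.const hu' c
  | add p q hp hq => simpa using hp.add h hq
  | monomial n c ih =>
    have := ih.mul h hu hr
    simpa [pow_succ, mul_assoc] using this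

theorem Rel.cfc_rel [Nontrivial A] (h : IsTr τ) {u : ℕ → A} (hu : ∀ m, u m * star (u m) = 1)
    (hu' : ∀ m, star (u m) * u m = 1) {x y : A} (hx : IsSelfAdjoint x) (hy : IsSelfAdjoint y)
    (hr : Rel τ u x y) (f : ℝ → ℝ) (hf : Continuous f) :
    Rel τ u (cfc f x) (cfc f y) := by
  apply Rel.limit h hu
  intro ε hε
  obtain ⟨δ, hδ, hδε⟩ : ∃ δ : ℝ, 0 < δ ∧ δ ^ 2 < ε := by
    refine ⟨Real.sqrt (ε / 2), by positivity, ?_⟩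
    rw [Real.sq_sqrt (by positivity)]; linarith
  set R := ‖x‖ + ‖y‖ with hR
  obtain ⟨P, hP⟩ := exists_polynomial_near_of_continuousOn (-R) R f hf.continuousOn δ hδ
  have key : ∀ z : A, IsSelfAdjoint z → ‖z‖ ≤ R → T τ (cfc f z - Polynomial.aeval z P) < ε := by
    intro z hz hzR
    refine lt_of_le_of_lt (h.T_le_norm _) (lt_of_le_of_lt ?_ hδε)
    have : ‖cfc f z - Polynomial.aeval z P‖ ≤ δ := by
      rw [← cfc_polynomial P z hz, ← cfc_sub _ _ z hf.continuousOn P.continuous.continuousOn]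
      apply norm_cfc_le hδ.le
      intro t ht
      have h1 := spectrum.norm_le_norm_of_mem ht
      rw [Real.norm_eq_abs] at h1
      have h2 := hP t (abs_le.1 (h1.trans hzR))
      rw [Real.norm_eq_abs, abs_sub_comm]
      exact h2.le
    gcongr
  refine ⟨_, _, hr.poly h hu hu' P, key x hx ?_, key y hy ?_⟩
  · rw [hR]; linarith [norm_nonneg y]
  · rw [hR]; linarith [norm_nonneg x]

theorem cut_sot [Nontrivial A] {x p : A} {c : ℝ} (hx : IsSelfAdjoint x) (hp : IsCut ρ x c p)
    (ξ : H) :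
    Tendsto (fun m : ℕ => ‖ρ (p - cfc (fun t : ℝ => min 1 ((m + 1) * max (t - c) 0)) x) ξ‖)
      atTop (𝓝 0) := by
  refine Metric.tendsto_atTop.2 fun ε hε => ?_
  obtain ⟨_, ⟨ζ, rfl⟩, hζ⟩ := Metric.mem_closure_iff.1 (hp.dense ξ) (ε / 2) (by positivity)
  obtain ⟨N, hN⟩ := exists_nat_gt (‖ζ‖ / (ε / 2))
  rw [div_lt_iff₀ (by positivity)] at hN
  refine ⟨N, fun m hm => ?_⟩
  rw [Real.dist_eq, sub_zero, abs_of_nonneg (norm_nonneg _)]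
  set f := cfc (fun t : ℝ => min 1 ((m + 1) * max (t - c) 0)) x with hf
  have hm1 : (0:ℝ) < m + 1 := by positivity
  have hfs : star f = f := (cfc_predicate _ _ : IsSelfAdjoint f)
  have h1 : p * f = f := by
    have hk : Continuous (fun t : ℝ => (m + 1) / max 1 ((m + 1) * (t - c))) := by
      refine Continuous.div (by fun_prop) (by fun_prop) fun t => ?_
      exact (lt_of_lt_of_le one_pos (le_max_left _ _)).ne'
    have : (fun t : ℝ => min 1 ((m + 1) * max (t - c) 0)) =
        fun t => max (t - c) 0 * ((m + 1) / max 1 ((m + 1) * (t - c))) := by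
      funext t
      rcases le_or_gt (t - c) 0 with h | h
      · rw [max_eq_right h]; simp
      · rw [max_eq_left h.le]
        rcases le_or_gt ((m + 1) * (t - c)) 1 with h' | h'
        · rw [min_eq_right h', max_eq_left h']; ring
        · rw [min_eq_left h'.le, max_eq_right h'.le]; field_simp
    rw [hf, this]
    exact hp.mul_cfc _ hk
  have h2 : f * p = f := by
    have := congrArg star h1
    rwa [star_mul, hfs, hp.sa] at this
  have h3 : p - f = (1 - f) * p := by rw [sub_mul, one_mul, h2]
  have h4 : 1 - f = cfc (fun t : ℝ => 1 - min 1 ((m + 1) * max (t - c) 0)) x := by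
    rw [cfc_sub _ _ x (by fun_prop) (by fun_prop), cfc_const (1:ℝ) x hx, map_one]
  have h5 : ‖ρ (1 - f)‖ ≤ 1 := by
    refine (NonUnitalStarAlgHom.norm_apply_le ρ _).trans ?_
    rw [h4]
    apply norm_cfc_le zero_le_one
    intro t _
    rw [Real.norm_eq_abs, abs_le]
    have : 0 ≤ min 1 ((m + 1) * max (t - c) 0) := le_min zero_le_one (by positivity)
    have := min_le_left 1 ((m + 1) * max (t - c) 0)
    constructor <;> linarith
  have h6 : ‖ρ ((1 - f) * cfc (fun t : ℝ => max (t - c) 0) x)‖ ≤ 1 / (m + 1) := by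
    refine (NonUnitalStarAlgHom.norm_apply_le ρ _).trans ?_
    rw [h4, ← cfc_mul _ _ x (by fun_prop) (by fun_prop)]
    apply norm_cfc_le (by positivity)
    intro t _
    have hs : 0 ≤ max (t - c) 0 := le_max_right _ _
    generalize max (t - c) 0 = s at hs
    rw [Real.norm_eq_abs, le_div_iff₀ hm1]
    rcases le_or_gt ((m + 1) * s) 1 with h' | h'
    · rw [min_eq_right h', abs_of_nonneg (by nlinarith)]
      nlinarith [mul_nonneg hm1.le hs]
    · rw [min_eq_left h'.le]; simp
  calc ‖ρ (p - f) ξ‖ = ‖ρ (1 - f) (ρ p ξ - ρ (cfc (fun t : ℝ => max (t - c) 0) x) ζ) +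
        ρ ((1 - f) * cfc (fun t : ℝ => max (t - c) 0) x) ζ‖ := by
        rw [h3, map_mul, map_mul, mul_apply_eq_comp, mul_apply_eq_comp, ← map_add, sub_add_cancel]
    _ ≤ ‖ρ (1 - f) (ρ p ξ - ρ (cfc (fun t : ℝ => max (t - c) 0) x) ζ)‖ +
        ‖ρ ((1 - f) * cfc (fun t : ℝ => max (t - c) 0) x) ζ‖ := norm_add_le _ _
    _ < ε / 2 + ε / 2 := by
        apply add_lt_add_of_lt_of_le
        · refine lt_of_le_of_lt ((ρ (1 - f)).le_of_opNorm_le h5 _) ?_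
          rw [one_mul, ← dist_eq_norm]; exact hζ
        · refine ((ρ _).le_of_opNorm_le h6 _).trans ?_
          rw [div_mul_eq_mul_div, one_mul, div_le_iff₀ hm1]
          have : (N:ℝ) ≤ m := by exact_mod_cast hm
          nlinarith
    _ = ε := by ring

theorem cut_T [Nontrivial A] (hV : VNData ρ) (hinj : Function.Injective ρ)
    (hτ : IsTr τ) {x p : A} {c : ℝ} (hx : IsSelfAdjoint x) (hp : IsCut ρ x c p) :
    Tendsto (fun m : ℕ => T τ (p - cfc (fun t : ℝ => min 1 ((m + 1) * max (t - c) 0)) x))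
      atTop (𝓝 0) := by
  obtain ⟨s, η, hη⟩ := exists_vectors hV hinj hτ
  refine squeeze_zero (fun m => hτ.T_nonneg _) (fun m => hη _) ?_
  have := (tendsto_finsetSum (Finset.univ : Finset (Fin s)) fun j _ =>
    (cut_sot hx hp (η j)).pow 2).const_mul 2
  simpa using this

theorem Rel.cut [Nontrivial A] (hV : VNData ρ) (hinj : Function.Injective ρ)
    (h : IsTr τ) {u : ℕ → A} (hu : ∀ m, u m * star (u m) = 1)
    (hu' : ∀ m, star (u m) * u m = 1) {x y : A} (hx : IsSelfAdjoint x) (hy : IsSelfAdjoint y)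
    (hr : Rel τ u x y) {c : ℝ} {p q : A} (hp : IsCut ρ x c p) (hq : IsCut ρ y c q) :
    Rel τ u p q := by
  apply Rel.limit h hu
  intro ε hε
  have h1 := (cut_T hV hinj h hx hp).eventually (gt_mem_nhds hε)
  have h2 := (cut_T hV hinj h hy hq).eventually (gt_mem_nhds hε)
  obtain ⟨m, hm1, hm2⟩ := (h1.and h2).exists
  exact ⟨_, _, hr.cfc_rel h hu hu' hx hy _ (by fun_prop), hm1, hm2⟩

end twonorm
end SOTU
namespace SOTU
section final
open Filter Topology
variable {A : Type*} [CStarAlgebra A]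
variable {H : Type*} [NormedAddCommGroup H] [InnerProductSpace ℂ H] [CompleteSpace H]
variable {ρ : A →⋆ₐ[ℂ] (H →L[ℂ] H)} {τ : A →ₗ[ℂ] ℂ}
variable [PartialOrder A] [StarOrderedRing A]

theorem proj_mul {e p : A} (he : IsStarProjection e) (hp : IsStarProjection p)
    (h : Commute e p) : IsStarProjection (e * p) :=
  ⟨he.isIdempotentElem.mul_of_commute h hp.isIdempotentElem,
    (he.isSelfAdjoint.commute_iff hp.isSelfAdjoint).1 h⟩

theorem intertwine (hV : VNData ρ) (hinj : Function.Injective ρ) (hτ : IsTr τ)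
    (L : List (A × A)) :
    ∀ (e f : A), IsStarProjection e → IsStarProjection f →
    (∀ x ∈ L, IsStarProjection x.1 ∧ IsStarProjection x.2) →
    (∀ x ∈ L, Commute e x.1 ∧ Commute f x.2) →
    (∀ x ∈ L, ∀ y ∈ L, Commute x.1 y.1 ∧ Commute x.2 y.2) →
    (∀ S : List (A × A), S.Sublist L →
      τ (e * (S.map Prod.fst).prod) = τ (f * (S.map Prod.snd).prod)) →
    ∃ v, star v * v = e ∧ v * star v = f ∧ ∀ x ∈ L, x.2 * v = v * x.1 := by
  induction L with
  | nil =>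
    intro e f he hf _ _ _ h
    obtain ⟨v, h1, h2⟩ := equiv_of_trace_eq hV hinj hτ he hf (by simpa using h [] (List.Sublist.refl _))
    exact ⟨v, h1, h2, by simp⟩
  | cons x L ih =>
    obtain ⟨p, q⟩ := x
    intro e f he hf hL hc hcc h
    obtain ⟨hp, hq⟩ := hL (p, q) List.mem_cons_self
    obtain ⟨hep, hfq⟩ := hc (p, q) List.mem_cons_self
    dsimp only at hp hq hep hfq
    have hpp : p * p = p := hp.isIdempotentElem
    have hqq : q * q = q := hq.isIdempotentElem
    have hqs : star q = q := hq.isSelfAdjoint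
    have hps : star p = p := hp.isSelfAdjoint
    have hpL : ∀ x ∈ L, Commute p x.1 ∧ Commute q x.2 := fun x hx =>
      hcc (p, q) List.mem_cons_self x (List.mem_cons_of_mem _ hx)
    have hT : ∀ S : List (A × A), S.Sublist L →
      τ (e * p * (S.map Prod.fst).prod) = τ (f * q * (S.map Prod.snd).prod) := by
      intro S hS
      have := h ((p, q) :: S) (hS.cons_cons _)
      simpa [mul_assoc] using this
    have he1 := proj_mul he hp hep
    have hf1 := proj_mul hf hq hfq
    have hep' : Commute e (1 - p) := (Commute.one_right e).sub_right hep
    have hfq' : Commute f (1 - q) := (Commute.one_right f).sub_right hfq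
    have he2 := proj_mul he hp.one_sub hep'
    have hf2 := proj_mul hf hq.one_sub hfq'
    have hL' := fun x hx => hL x (List.mem_cons_of_mem (p, q) hx)
    have hc' := fun x hx => hc x (List.mem_cons_of_mem (p, q) hx)
    have hcc' : ∀ x ∈ L, ∀ y ∈ L, Commute x.1 y.1 ∧ Commute x.2 y.2 := fun x hx y hy =>
      hcc x (List.mem_cons_of_mem _ hx) y (List.mem_cons_of_mem _ hy)
    obtain ⟨v, v1, v2, v3⟩ := ih (e * p) (f * q) he1 hf1 hL'
      (fun x hx => ⟨(hc' x hx).1.mul_left (hpL x hx).1, (hc' x hx).2.mul_left (hpL x hx).2⟩) hcc' hT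
    obtain ⟨w, w1, w2, w3⟩ := ih (e * (1 - p)) (f * (1 - q)) he2 hf2 hL'
      (fun x hx => ⟨(hc' x hx).1.mul_left ((Commute.one_left _).sub_left (hpL x hx).1),
        (hc' x hx).2.mul_left ((Commute.one_left _).sub_left (hpL x hx).2)⟩) hcc' (by
        intro S hS
        have a1 := h S (hS.cons _)
        have a2 := hT S hS
        simp only [mul_sub, mul_one, sub_mul, map_sub, a1, a2])
    have vp : v * p = v := by
      have := proj_of_pi v1 he1
      calc v * p = v * (e * p) * p := by rw [this]
        _ = v * (e * (p * p)) := by simp only [mul_assoc]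
        _ = v := by rw [hpp, this]
    have wp : w * p = 0 := by
      have := proj_of_pi w1 he2
      calc w * p = w * (e * (1 - p)) * p := by rw [this]
        _ = w * (e * (p - p * p)) := by simp only [mul_assoc, sub_mul, one_mul]
        _ = 0 := by rw [hpp]; simp
    have qv : q * v = v := by
      have h0 := proj_of_pi (v := star v) (by rw [star_star]; exact v2) hf1
      have : star v * q = star v := by
        calc star v * q = star v * (f * q) * q := by rw [h0]
          _ = star v * (f * (q * q)) := by simp only [mul_assoc]
          _ = star v := by rw [hqq, h0]
      have := congrArg star this
      simpa [hqs] using this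
    have qw : q * w = 0 := by
      have h0 := proj_of_pi (v := star w) (by rw [star_star]; exact w2) hf2
      have : star w * q = 0 := by
        calc star w * q = star w * (f * (1 - q)) * q := by rw [h0]
          _ = star w * (f * (q - q * q)) := by simp only [mul_assoc, sub_mul, one_mul]
          _ = 0 := by rw [hqq]; simp
      have := congrArg star this
      simpa [hqs] using this
    have c1 : star v * w = 0 := by
      rw [← qv, star_mul, hqs, mul_assoc, qw, mul_zero]
    have c2 : star w * v = 0 := by simpa using congrArg star c1
    have c3 : w * star v = 0 := by
      rw [← vp, star_mul, hps, ← mul_assoc, wp, zero_mul]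
    have c4 : v * star w = 0 := by simpa using congrArg star c3
    refine ⟨v + w, ?_, ?_, ?_⟩
    · rw [star_add, add_mul, mul_add, mul_add, c1, c2, v1, w1, mul_sub]; simp
    · rw [star_add, add_mul, mul_add, mul_add, c3, c4, v2, w2, mul_sub]; simp
    · intro x hx
      rcases List.mem_cons.1 hx with rfl | hx
      · show q * (v + w) = (v + w) * p
        rw [mul_add, add_mul, vp, wp, qv, qw]
      · rw [mul_add, add_mul, v3 x hx, w3 x hx]

theorem main_abstract [Nontrivial A] (hV : VNData ρ) (hinj : Function.Injective ρ) (hτ : IsTr τ)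
    {n : ℕ} (a b : Fin n → A) (ha : ∀ i, IsSelfAdjoint (a i)) (hb : ∀ i, IsSelfAdjoint (b i))
    (hac : ∀ i j, a i * a j = a j * a i) (hbc : ∀ i j, b i * b j = b j * b i)
    (hsot : ∀ ε : ℝ, 0 < ε → ∀ (s : ℕ) (ξ : Fin s → H), ∃ u : A, u * star u = 1 ∧ star u * u = 1 ∧
      ∀ (i : Fin n) (t : Fin s), ‖ρ (star u * b i * u) (ξ t) - ρ (a i) (ξ t)‖ < ε)
    (ε : ℝ) (hε : 0 < ε) :
    ∃ u : A, u * star u = 1 ∧ star u * u = 1 ∧ ∀ i, ‖star u * b i * u - a i‖ < ε := by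
  obtain ⟨s, η, hη⟩ := exists_vectors hV hinj hτ
  choose u hu hu' hua using fun m : ℕ => hsot (1 / (m + 1)) (by positivity) s η
  have hrel : ∀ i, Rel τ u (a i) (b i) := by
    intro i
    have h0 : Tendsto (fun m : ℕ => 2 * ∑ _j : Fin s, (1 / ((m:ℝ) + 1)) ^ 2) atTop (𝓝 0) := by
      have := (tendsto_finsetSum (Finset.univ : Finset (Fin s)) fun j _ =>
        (tendsto_one_div_add_atTop_nhds_zero_nat (𝕜 := ℝ)).pow 2).const_mul 2
      simpa using this
    refine squeeze_zero (fun m => hτ.T_nonneg _) (fun m => (hη _).trans ?_) h0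
    gcongr with j
    rw [map_sub]
    exact (hua m i j).le
  have hR : ∃ R : ℝ, ∀ i, ‖a i‖ ≤ R ∧ ‖b i‖ ≤ R := by
    refine ⟨∑ i, (‖a i‖ + ‖b i‖), fun i => ?_⟩
    have := Finset.single_le_sum (f := fun i => ‖a i‖ + ‖b i‖) (fun i _ => by positivity)
      (Finset.mem_univ i)
    constructor <;> linarith [norm_nonneg (a i), norm_nonneg (b i)]
  obtain ⟨R, hR⟩ := hR
  obtain ⟨δ, hδ, hδε⟩ : ∃ δ : ℝ, 0 < δ ∧ 2 * δ < ε := ⟨ε / 3, by positivity, by linarith⟩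
  obtain ⟨m, hm⟩ := exists_nat_gt (2 * R / δ)
  rw [div_lt_iff₀ hδ] at hm
  choose p hp using fun (i : Fin n) (k : ℕ) => hV.exists_cut (a i) (-R + k * δ)
  choose q hq using fun (i : Fin n) (k : ℕ) => hV.exists_cut (b i) (-R + k * δ)
  have hpc : ∀ i k j l, Commute (p i k) (p j l) := fun i k j l =>
    (hp i k).commute (hp j l).sa ((hp j l).commute (ha i) (hac j i)).symm
  have hqc : ∀ i k j l, Commute (q i k) (q j l) := fun i k j l =>
    (hq i k).commute (hq j l).sa ((hq j l).commute (hb i) (hbc j i)).symm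
  have hpq : ∀ i k, Rel τ u (p i k) (q i k) := fun i k =>
    Rel.cut hV hinj hτ hu hu' (ha i) (hb i) (hrel i) (hp i k) (hq i k)
  let L : List (A × A) := (Finset.univ : Finset (Fin n × Fin m)).toList.map
    (fun ik => (p ik.1 ik.2, q ik.1 ik.2))
  have hLm : ∀ x ∈ L, ∃ i, ∃ k : ℕ, x = (p i k, q i k) := by
    intro x hx
    obtain ⟨ik, _, rfl⟩ := List.mem_map.1 hx
    exact ⟨_, _, rfl⟩
  have hLr : ∀ S : List (A × A), (∀ x ∈ S, ∃ i, ∃ k : ℕ, x = (p i k, q i k)) →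
      Rel τ u (S.map Prod.fst).prod (S.map Prod.snd).prod := by
    intro S
    induction S with
    | nil => intro _; simpa using Rel.const (τ := τ) hu' 1
    | cons x S ih =>
      intro hS
      obtain ⟨i, k, rfl⟩ := hS x List.mem_cons_self
      have := (hpq i k).mul hτ hu (ih fun x hx => hS x (List.mem_cons_of_mem _ hx))
      simpa using this
  obtain ⟨v, v1, v2, v3⟩ := intertwine hV hinj hτ L 1 1 (IsStarProjection.one A) (IsStarProjection.one A)
    (by
      intro x hx
      obtain ⟨i, k, rfl⟩ := hLm x hx
      exact ⟨(hp i k).proj, (hq i k).proj⟩)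
    (fun x _ => ⟨Commute.one_left _, Commute.one_left _⟩)
    (by
      intro x hx y hy
      obtain ⟨i, k, rfl⟩ := hLm x hx
      obtain ⟨j, l, rfl⟩ := hLm y hy
      exact ⟨hpc _ _ _ _, hqc _ _ _ _⟩)
    (by
      intro S hS
      rw [one_mul, one_mul]
      exact (hLr S fun x hx => hLm x (hS.subset hx)).trace_eq hτ hu)
  refine ⟨v, v2, v1, fun i => ?_⟩
  have hn : ‖v‖ = 1 := by
    have h1 : ‖v‖ * ‖v‖ = 1 := by rw [← CStarRing.norm_star_mul_self, v1, norm_one]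
    nlinarith [norm_nonneg v]
  have hspec : ∀ x : A, ‖x‖ ≤ R → ∀ t ∈ spectrum ℝ x, -R ≤ t ∧ t ≤ -R + m * δ := by
    intro x hx t ht
    have h1 := spectrum.norm_le_norm_of_mem ht
    rw [Real.norm_eq_abs] at h1
    have := abs_le.1 (h1.trans hx)
    constructor <;> linarith
  have l1 := layer_norm (ha i) hδ (hp i) m (hspec _ (hR i).1)
  have l2 := layer_norm (hb i) hδ (hq i) m (hspec _ (hR i).2)
  have hvk : ∀ k ∈ Finset.range m, star v * q i k * v = p i k := by
    intro k hk
    have := v3 (p i k, q i k) (List.mem_map.2 ⟨(i, ⟨k, Finset.mem_range.1 hk⟩),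
      Finset.mem_toList.2 (Finset.mem_univ _), rfl⟩)
    simp only at this
    rw [mul_assoc, this, ← mul_assoc, v1, one_mul]
  have e0 : star v * (∑ k ∈ Finset.range m, q i k) * v = ∑ k ∈ Finset.range m, p i k := by
    rw [Finset.mul_sum, Finset.sum_mul]
    exact Finset.sum_congr rfl hvk
  have e1 : star v * b i * v - a i =
      (δ • ∑ k ∈ Finset.range m, p i k - (a i - algebraMap ℝ A (-R))) -
      star v * (δ • ∑ k ∈ Finset.range m, q i k - (b i - algebraMap ℝ A (-R))) * v := by
    simp only [mul_sub, sub_mul, Algebra.algebraMap_eq_smul_one, mul_smul_comm, smul_mul_assoc,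
      mul_one, v1, e0]
    abel
  rw [e1]
  refine lt_of_le_of_lt (norm_sub_le _ _) (lt_of_le_of_lt (add_le_add l1 ?_) (by linarith : δ + δ < ε))
  refine (norm_mul_le _ _).trans ?_
  rw [hn, mul_one]
  refine (norm_mul_le _ _).trans ?_
  rwa [norm_star, hn, one_mul]

end final

theorem main_noorder {A : Type*} [CStarAlgebra A] [Nontrivial A]
    {H : Type*} [NormedAddCommGroup H] [InnerProductSpace ℂ H] [CompleteSpace H]
    {ρ : A →⋆ₐ[ℂ] (H →L[ℂ] H)} {τ : A →ₗ[ℂ] ℂ}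
    (hV : VNData ρ) (hinj : Function.Injective ρ) (hτ : IsTr τ)
    {n : ℕ} (a b : Fin n → A) (ha : ∀ i, IsSelfAdjoint (a i)) (hb : ∀ i, IsSelfAdjoint (b i))
    (hac : ∀ i j, a i * a j = a j * a i) (hbc : ∀ i j, b i * b j = b j * b i)
    (hsot : ∀ ε : ℝ, 0 < ε → ∀ (s : ℕ) (ξ : Fin s → H), ∃ u : A, u * star u = 1 ∧ star u * u = 1 ∧
      ∀ (i : Fin n) (t : Fin s), ‖ρ (star u * b i * u) (ξ t) - ρ (a i) (ξ t)‖ < ε)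
    (ε : ℝ) (hε : 0 < ε) :
    ∃ u : A, u * star u = 1 ∧ star u * u = 1 ∧ ∀ i, ‖star u * b i * u - a i‖ < ε := by
  let _ := CStarAlgebra.spectralOrder A
  have := CStarAlgebra.spectralOrderedRing A
  exact main_abstract hV hinj hτ a b ha hb hac hbc hsot ε hε

end SOTU
namespace SOTU
section concrete
open Filter Topology
variable {H : Type*} [NormedAddCommGroup H] [InnerProductSpace ℂ H] [CompleteSpace H]

theorem vn_mem {M : VonNeumannAlgebra H} {x : H →L[ℂ] H}
    (h : ∀ y ∈ M.commutant, y * x = x * y) : x ∈ M := by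
  rw [← M.commutant_commutant]
  exact VonNeumannAlgebra.mem_commutant_iff.2 h

theorem vn_comm {M : VonNeumannAlgebra H} {x y : H →L[ℂ] H} (hx : x ∈ M) (hy : y ∈ M.commutant)
    (ξ : H) : x (y ξ) = y (x ξ) :=
  congrArg (fun T : H →L[ℂ] H => T ξ) (VonNeumannAlgebra.mem_commutant_iff.1 hy x hx)

theorem vn_isClosed (M : VonNeumannAlgebra H) : IsClosed (M.toStarSubalgebra : Set (H →L[ℂ] H)) := by
  have : (M.toStarSubalgebra : Set (H →L[ℂ] H)) =
      ⋂ y ∈ M.commutant, {x : H →L[ℂ] H | y * x = x * y} := by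
    ext x
    simp only [Set.mem_iInter, Set.mem_ofPred_eq]
    refine ⟨fun hx y hy => ?_, fun h => vn_mem h⟩
    exact (VonNeumannAlgebra.mem_commutant_iff.1 hy x hx).symm
  rw [this]
  refine isClosed_biInter fun y _ => isClosed_eq ?_ ?_
  · exact continuous_const.mul continuous_id
  · exact continuous_id.mul continuous_const

theorem proj_mem (M : VonNeumannAlgebra H) (K0 : Submodule ℂ H)
    (h : ∀ y ∈ M.commutant, ∀ ξ ∈ K0, y ξ ∈ K0) : K0.topologicalClosure.starProjection ∈ M := by
  rw [VonNeumannAlgebra.IsStarProjection.mem_iff isStarProjection_starProjection]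
  intro y hy
  rw [Submodule.range_starProjection]
  have : K0.topologicalClosure ≤ (K0.topologicalClosure).comap (y : H →ₗ[ℂ] H) := by
    apply Submodule.topologicalClosure_minimal
    · intro ξ hξ
      exact K0.le_topologicalClosure (h y hy ξ hξ)
    · exact K0.isClosed_topologicalClosure.preimage y.continuous
  exact this

theorem vn_rp (M : VonNeumannAlgebra H) (y : M.toStarSubalgebra) :
    ∃ p : M.toStarSubalgebra, IsStarProjection p ∧ p * y = y ∧
    (∀ z : M.toStarSubalgebra, z * y = 0 → z * p = 0) ∧
    ∀ ξ, p.1 ξ ∈ closure (Set.range (fun ζ => y.1 ζ)) := by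
  set K0 : Submodule ℂ H := LinearMap.range (y.1 : H →ₗ[ℂ] H) with hK0
  have hmem : K0.topologicalClosure.starProjection ∈ M := by
    apply proj_mem
    rintro x hx _ ⟨ζ, rfl⟩
    exact ⟨x ζ, vn_comm y.2 hx ζ⟩
  have hP : IsStarProjection K0.topologicalClosure.starProjection := isStarProjection_starProjection
  refine ⟨⟨_, hmem⟩, ⟨Subtype.ext hP.1, Subtype.ext hP.2⟩, ?_, ?_, ?_⟩
  · apply Subtype.ext
    ext ζ
    exact Submodule.starProjection_eq_self_iff.2 (K0.le_topologicalClosure ⟨ζ, rfl⟩)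
  · intro z hz
    apply Subtype.ext
    ext ζ
    have hle : K0.topologicalClosure ≤ LinearMap.ker (z.1 : H →ₗ[ℂ] H) := by
      apply Submodule.topologicalClosure_minimal
      · rintro _ ⟨ζ, rfl⟩
        exact congrArg (fun T : M.toStarSubalgebra => T.1 ζ) hz
      · exact z.1.isClosed_ker
    exact hle (Submodule.starProjection_apply_mem _ ζ)
  · intro ξ
    exact Submodule.starProjection_apply_mem K0.topologicalClosure ξ

theorem vn_fac (M : VonNeumannAlgebra H)
    (hfactor : ∀ z : ↥M.toStarSubalgebra, (∀ x : ↥M.toStarSubalgebra, z * x = x * z) →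
      ∃ c : ℂ, z = c • (1 : ↥M.toStarSubalgebra))
    (p q : M.toStarSubalgebra) (h : ∀ x, q * x * p = 0) : p = 0 ∨ q = 0 := by
  set K0 : Submodule ℂ H :=
    Submodule.span ℂ {η | ∃ x : M.toStarSubalgebra, ∃ ξ, η = x.1 (p.1 ξ)} with hK0
  have hmem : K0.topologicalClosure.starProjection ∈ M := by
    apply proj_mem
    intro y hy
    show K0 ≤ K0.comap (y : H →ₗ[ℂ] H)
    rw [hK0, Submodule.span_le]
    rintro _ ⟨x, ξ, rfl⟩
    apply Submodule.subset_span
    refine ⟨x, y ξ, ?_⟩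
    show y (x.1 (p.1 ξ)) = _
    rw [vn_comm p.2 hy, vn_comm x.2 hy]
  have hmem' : K0.topologicalClosure.starProjection ∈ M.commutant := by
    apply proj_mem
    intro y hy
    rw [VonNeumannAlgebra.commutant_commutant] at hy
    show K0 ≤ K0.comap (y : H →ₗ[ℂ] H)
    rw [hK0, Submodule.span_le]
    rintro _ ⟨x, ξ, rfl⟩
    apply Submodule.subset_span
    exact ⟨⟨y, hy⟩ * x, ξ, rfl⟩
  obtain ⟨c, hc⟩ := hfactor ⟨_, hmem⟩ (fun x => Subtype.ext
    (VonNeumannAlgebra.mem_commutant_iff.1 hmem' x.1 x.2).symm)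
  have hc' : ∀ ξ, K0.topologicalClosure.starProjection ξ = c • ξ := fun ξ =>
    congrArg (fun T : M.toStarSubalgebra => T.1 ξ) hc
  by_cases hp : p = 0
  · exact Or.inl hp
  right
  obtain ⟨ξ, hξ⟩ : ∃ ξ, p.1 ξ ≠ 0 := by
    by_contra hcon
    push Not at hcon
    exact hp (Subtype.ext (ContinuousLinearMap.ext hcon))
  have h1 : c • p.1 ξ = p.1 ξ := by
    rw [← hc']
    refine Submodule.starProjection_eq_self_iff.2 (K0.le_topologicalClosure
      (Submodule.subset_span ⟨1, ξ, rfl⟩))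
  have hc1 : c = 1 := by
    have : (c - 1) • p.1 ξ = 0 := by rw [sub_smul, one_smul, h1, sub_self]
    rcases smul_eq_zero.1 this with h | h
    · exact sub_eq_zero.1 h
    · exact absurd h hξ
  apply Subtype.ext
  ext ζ
  have hle : K0.topologicalClosure ≤ LinearMap.ker (q.1 : H →ₗ[ℂ] H) := by
    apply Submodule.topologicalClosure_minimal
    · rw [hK0, Submodule.span_le]
      rintro _ ⟨x, ξ, rfl⟩
      exact congrArg (fun T : M.toStarSubalgebra => T.1 ξ) (h x)
    · exact q.1.isClosed_ker
  apply hle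
  have := hc' ζ
  rw [hc1, one_smul] at this
  exact Submodule.starProjection_eq_self_iff.1 this

theorem pi_norm {B : Type*} [CStarAlgebra B] {v : B} (hv : v * star v * v = v) : ‖v‖ ≤ 1 := by
  have h1 : star v * v * (star v * v) = star v * v := by
    rw [mul_assoc, ← mul_assoc v, hv]
  have h2 : ‖star v * v‖ * ‖star v * v‖ = ‖star v * v‖ := by
    rw [← CStarRing.norm_star_mul_self (x := star v * v)]
    simp [h1]
  rw [CStarRing.norm_star_mul_self] at h2
  by_contra h
  push Not at h
  have : 1 < ‖v‖ * ‖v‖ := by nlinarith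
  nlinarith

theorem ext_norm {v w : H →L[ℂ] H} (h : Ext v w) (ξ : H) :
    ‖w ξ - v ξ‖ ^ 2 = ‖w ξ‖ ^ 2 - ‖v ξ‖ ^ 2 := by
  have h1 : inner ℂ (w ξ) (v ξ) = ((‖v ξ‖ ^ 2 : ℝ) : ℂ) := by
    have e : (star v * w) ξ = (star v * v) ξ := by rw [h.2]
    have e' : ContinuousLinearMap.adjoint v (w ξ) = ContinuousLinearMap.adjoint v (v ξ) := e
    rw [← ContinuousLinearMap.adjoint_inner_left, e', ContinuousLinearMap.adjoint_inner_left,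
      inner_self_eq_norm_sq_to_K]
    simp
  have h2 : RCLike.re (inner ℂ (w ξ) (v ξ)) = ‖v ξ‖ ^ 2 := by
    rw [h1]; exact Complex.ofReal_re _
  rw [@norm_sub_sq ℂ, h2]
  ring

/-- index type of a chain, without the order inherited from operators -/
@[ext] structure ChainIdx (c : Set (H →L[ℂ] H)) where
  val : H →L[ℂ] H
  mem : val ∈ c

theorem op_chain (c : Set (H →L[ℂ] H)) (hne : c.Nonempty) (hc : IsChain Ext c)
    (hpi : ∀ v ∈ c, v * star v * v = v) :
    ∃ w : H →L[ℂ] H, (∀ M : VonNeumannAlgebra H, (∀ v ∈ c, v ∈ M) → w ∈ M) ∧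
      (∀ v ∈ c, Ext v w) ∧ ∀ ξ, w ξ ∈ closure ((fun v => v ξ) '' c) := by
  let _ : Preorder (ChainIdx c) :=
    { le := fun v w => Ext v.1 w.1
      le_refl := fun v => ⟨rfl, rfl⟩
      le_trans := fun u v w huv hvw =>
        ext_trans (hpi _ u.2) (hpi _ v.2) huv hvw }
  have hle : ∀ v w : ChainIdx c, v ≤ w ↔ Ext v.1 w.1 := fun v w => Iff.rfl
  have : Nonempty (ChainIdx c) := ⟨⟨hne.some, hne.some_mem⟩⟩
  have : IsDirectedOrder (ChainIdx c) := ⟨fun v w => by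
    by_cases h : v = w
    · exact ⟨v, le_rfl, h ▸ le_rfl⟩
    rcases hc v.2 w.2 (fun h' => h (ChainIdx.ext h')) with h' | h'
    · exact ⟨w, h', le_rfl⟩
    · exact ⟨v, le_rfl, h'⟩⟩
  have hb : ∀ (v : ChainIdx c) ξ, ‖v.1 ξ‖ ≤ ‖ξ‖ := fun v ξ => by
    simpa using v.1.le_of_opNorm_le (pi_norm (hpi _ v.2)) ξ
  have hlim : ∀ ξ, ∃ η, Tendsto (fun v : ChainIdx c => v.1 ξ) atTop (𝓝 η) := by
    intro ξ
    apply cauchy_map_iff_exists_tendsto.1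
    rw [Metric.cauchy_iff]
    refine ⟨inferInstance, fun ε hε => ?_⟩
    have hbd : BddAbove (Set.range fun v : ChainIdx c => ‖v.1 ξ‖ ^ 2) := by
      refine ⟨‖ξ‖ ^ 2, ?_⟩
      rintro _ ⟨v, rfl⟩
      have := hb v ξ
      show ‖v.1 ξ‖ ^ 2 ≤ _
      gcongr
    obtain ⟨v0, hv0⟩ := exists_lt_of_lt_ciSup
      (show (⨆ v : ChainIdx c, ‖v.1 ξ‖ ^ 2) - (ε / 2) ^ 2 < ⨆ v : ChainIdx c, ‖v.1 ξ‖ ^ 2 by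
        have : 0 < (ε / 2) ^ 2 := by positivity
        linarith)
    have hd : ∀ v : ChainIdx c, v0 ≤ v → dist (v.1 ξ) (v0.1 ξ) < ε / 2 := by
      intro v hv
      rw [dist_eq_norm]
      have h1 := ext_norm hv ξ
      have h2 := le_ciSup hbd v
      apply lt_of_pow_lt_pow_left₀ 2 (by positivity)
      linarith
    refine ⟨(fun v : ChainIdx c => v.1 ξ) '' Set.Ici v0, image_mem_map (Ici_mem_atTop v0), ?_⟩
    rintro _ ⟨x, hx, rfl⟩ _ ⟨y, hy, rfl⟩
    have := dist_triangle_right (x.1 ξ) (y.1 ξ) (v0.1 ξ)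
    have h1 := hd x hx
    have h2 := hd y hy
    show dist (x.1 ξ) (y.1 ξ) < ε
    linarith
  choose g hg using hlim
  have hgt : Tendsto (fun (v : ChainIdx c) (ξ : H) => (v.1 : H →ₗ[ℂ] H) ξ) atTop (𝓝 g) :=
    tendsto_pi_nhds.2 hg
  let w : H →L[ℂ] H := (linearMapOfTendsto g (fun v : ChainIdx c => (v.1 : H →ₗ[ℂ] H)) hgt).mkContinuous 1
    (fun ξ => by
      rw [one_mul]
      exact le_of_tendsto (hg ξ).norm (Eventually.of_forall fun v => hb v ξ))
  have hw : ∀ ξ, Tendsto (fun v : ChainIdx c => v.1 ξ) atTop (𝓝 (w ξ)) := hg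
  refine ⟨w, ?_, ?_, ?_⟩
  · intro M hM
    apply vn_mem
    intro y hy
    ext ξ
    show y (w ξ) = w (y ξ)
    refine tendsto_nhds_unique ((y.continuous.tendsto _).comp (hw ξ)) ?_
    refine (hw (y ξ)).congr fun v => ?_
    exact vn_comm (hM _ v.2) hy ξ
  · intro v hv
    constructor
    · ext ξ
      refine tendsto_nhds_unique (hw (star v ξ)) ?_
      refine (tendsto_const_nhds (x := (v * star v) ξ)).congr' ?_
      filter_upwards [Ici_mem_atTop (⟨v, hv⟩ : ChainIdx c)] with x hx
      have : Ext v x.1 := hx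
      exact (congrArg (fun T : H →L[ℂ] H => T ξ) this.1).symm
    · ext ξ
      refine tendsto_nhds_unique (((star v).continuous.tendsto _).comp (hw ξ)) ?_
      refine (tendsto_const_nhds (x := (star v * v) ξ)).congr' ?_
      filter_upwards [Ici_mem_atTop (⟨v, hv⟩ : ChainIdx c)] with x hx
      have : Ext v x.1 := hx
      exact (congrArg (fun T : H →L[ℂ] H => T ξ) this.2).symm
  · intro ξ
    exact mem_closure_of_tendsto (hw ξ) (Eventually.of_forall fun v => ⟨v.1, v.2, rfl⟩)

end concrete
end SOTU

/-- In a II₁ factor `M ⊆ B(H)`, if a commuting self-adjoint family `(a₁,…,a_n)` lies in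
the coordinate-wise strong-operator-topology closure of the joint unitary orbit of a
commuting self-adjoint family `(b₁,…,b_n)`, then it lies in the coordinate-wise norm
closure of that orbit. -/
theorem sot_closure_of_joint_unitary_orbit_eq_norm_closure
    {H : Type*} [NormedAddCommGroup H] [InnerProductSpace ℂ H] [CompleteSpace H]
    (M : VonNeumannAlgebra H)
    (τ : ↥M.toStarSubalgebra →ₗ[ℂ] ℂ) (hτ1 : τ 1 = 1)
    (htr : ∀ x y : ↥M.toStarSubalgebra, τ (x * y) = τ (y * x))
    (hτpos : ∀ x : ↥M.toStarSubalgebra, 0 ≤ τ (star x * x))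
    (hτfaith : ∀ x : ↥M.toStarSubalgebra, τ (star x * x) = 0 → x = 0)
    (hfactor : ∀ z : ↥M.toStarSubalgebra, (∀ x : ↥M.toStarSubalgebra, z * x = x * z) → ∃ c : ℂ, z = c • (1 : ↥M.toStarSubalgebra))
    (hII1 : ∀ t : ℝ, 0 ≤ t → t ≤ 1 →
      ∃ e : ↥M.toStarSubalgebra, e = star e ∧ e * e = e ∧ τ e = (t : ℂ))
    (n : ℕ) (a b : Fin n → ↥M.toStarSubalgebra)
    (hasa : ∀ i, a i = star (a i)) (hbsa : ∀ i, b i = star (b i))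
    (hacomm : ∀ i j, a i * a j = a j * a i)
    (hbcomm : ∀ i j, b i * b j = b j * b i)
    -- `a` lies in the coordinate-wise SOT closure of the joint unitary orbit of `b`:
    (hsot : ∀ ε : ℝ, 0 < ε → ∀ (s : ℕ) (ξ : Fin s → H),
      ∃ u : ↥M.toStarSubalgebra, u * star u = 1 ∧ star u * u = 1 ∧
        ∀ (i : Fin n) (t : Fin s),
          ‖((star u * b i * u : ↥M.toStarSubalgebra) : H →L[ℂ] H) (ξ t) -
            ((a i : ↥M.toStarSubalgebra) : H →L[ℂ] H) (ξ t)‖ < ε) :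
    ∀ ε : ℝ, 0 < ε →
      ∃ u : ↥M.toStarSubalgebra, u * star u = 1 ∧ star u * u = 1 ∧
        ∀ i, ‖star u * b i * u - a i‖ < ε := by
  have : IsClosed (M.toStarSubalgebra : Set (H →L[ℂ] H)) := SOTU.vn_isClosed M
  have hnt : Nontrivial ↥M.toStarSubalgebra := ⟨0, 1, fun h => by
    have := congrArg τ h
    rw [hτ1, map_zero] at this
    exact zero_ne_one this⟩
  have hV : SOTU.VNData (A := ↥M.toStarSubalgebra) M.toStarSubalgebra.subtype := by
    refine ⟨fun y _ => SOTU.vn_rp M y, ?_, fun p q _ _ h => SOTU.vn_fac M hfactor p q h⟩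
    intro c hne hc hpi
    obtain ⟨w, h1, h2, h3⟩ := SOTU.op_chain (Subtype.val '' c) (hne.image _)
      (by
        rintro _ ⟨x, hx, rfl⟩ _ ⟨y, hy, rfl⟩ hxy
        have : x ≠ y := fun h => hxy (congrArg _ h)
        rcases hc hx hy this with h | h
        · exact Or.inl ⟨congrArg Subtype.val h.1, congrArg Subtype.val h.2⟩
        · exact Or.inr ⟨congrArg Subtype.val h.1, congrArg Subtype.val h.2⟩)
      (by
        rintro _ ⟨x, hx, rfl⟩
        exact congrArg Subtype.val (hpi x hx))
    refine ⟨⟨w, h1 M ?_⟩, ?_, ?_⟩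
    · rintro _ ⟨x, _, rfl⟩
      exact x.2
    · intro v hv
      obtain ⟨k1, k2⟩ := h2 v.1 ⟨v, hv, rfl⟩
      exact ⟨Subtype.ext k1, Subtype.ext k2⟩
    · intro ξ
      have := h3 ξ
      rw [Set.image_image] at this
      exact this
  intro ε hε
  exact SOTU.main_noorder (A := ↥M.toStarSubalgebra) (ρ := M.toStarSubalgebra.subtype) (τ := τ)
    hV Subtype.val_injective ⟨hτ1, htr, hτpos, hτfaith⟩ a b
    (fun i => (hasa i).symm) (fun i => (hbsa i).symm) hacomm hbcomm hsot ε hε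
end
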